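/- Let N ≥ 2, 1 < q ≤ 1* := N/(N-1), a > 0, b > 0, E_q := (1/(N^{N-1} ω_{N-1}))^{q-1}. Define α_v := inf { (1 - ‖u‖_1)/‖u‖_q^q : u ∈ BV(ℝ^N), ‖u‖_{TV}^a + ‖u‖_1^b = 1 } and g(t) := ((1+t)^{1/b} - 1)(1+t)^{(q-1)(N/a - (N-1)/b)} / t^{(q-1)N/a} for t > 0. Then α_v = (1/E_q) inf_{t>0} g(t). -/

import Mathlib

open MeasureTheory Real Filter Topology

noncomputable section

abbrev Euc (N : ℕ) := EuclideanSpace ℝ (Fin N)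

/-- The set of values `∫ u div ψ` over admissible test vector fields. -/
def TVSet (N : ℕ) (u : Euc N → ℝ) : Set ℝ :=
  { r | ∃ ψ : Euc N → Euc N, ContDiff ℝ 1 ψ ∧ HasCompactSupport ψ ∧
      (∀ x, ‖ψ x‖ ≤ 1) ∧
      r = ∫ x, u x * (∑ i, fderiv ℝ (fun y => ψ y i) x (EuclideanSpace.single i 1)) }

/-- Total variation of `u`. -/
def tv (N : ℕ) (u : Euc N → ℝ) : ℝ := sSup (TVSet N u)

/-- `u` is a function of bounded variation on `ℝ^N`. -/
def MemBV (N : ℕ) (u : Euc N → ℝ) : Prop :=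
  Integrable u ∧ BddAbove (TVSet N u)

/-- The `L¹` norm. -/
def nrm1 (N : ℕ) (u : Euc N → ℝ) : ℝ := (eLpNorm u 1 volume).toReal

/-- The `L^q` norm, `q` a real exponent. -/
def nrmq (N : ℕ) (q : ℝ) (u : Euc N → ℝ) : ℝ :=
  (eLpNorm u (ENNReal.ofReal q) volume).toReal

/-- Surface area `ω_{N-1}` of the unit sphere in `ℝ^N`, as `N` times the
volume of the unit ball. -/
def omegaS (N : ℕ) : ℝ := N * (volume (Metric.ball (0 : Euc N) 1)).toReal

/-- The Gagliardo–Nirenberg ratio `‖u‖_q^q / (‖u‖_1^{q-(q-1)N} ‖u‖_{TV}^{(q-1)N})`. -/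
def ratioQ (N : ℕ) (q : ℝ) (u : Euc N → ℝ) : ℝ :=
  nrmq N q u ^ q / (nrm1 N u ^ (q - (q-1)*N) * tv N u ^ ((q-1)*(N:ℝ)))

/-- The best constant `E_q` on `BV(ℝ^N)`. -/
def EqSup (N : ℕ) (q : ℝ) : ℝ :=
  sSup { r | ∃ u : Euc N → ℝ, MemBV N u ∧ u ≠ 0 ∧ r = ratioQ N q u }

section PartOne
open scoped ENNReal NNReal Pointwise

lemma bm1_compact {K L C : Set ℝ} (hK : IsCompact K) (hL : IsCompact L) (hKn : K.Nonempty)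
    (hLn : L.Nonempty) (hC : ∀ x ∈ K, ∀ y ∈ L, x + y ∈ C) :
    volume K + volume L ≤ volume C := by
  obtain ⟨a, ha, ha'⟩ := hK.exists_isGreatest hKn
  obtain ⟨b, hb, hb'⟩ := hL.exists_isLeast hLn
  have h1 : volume ((fun x => b + x) '' K) = volume K := by
    simp only [Set.image_add_left]; exact measure_preimage_add _ _ _
  have h2 : volume ((fun x => a + x) '' L) = volume L := by
    simp only [Set.image_add_left]; exact measure_preimage_add _ _ _
  have hcL : IsCompact ((fun x => a + x) '' L) := hL.image (by fun_prop)
  rw [← h1, ← h2, ← measure_union₀ hcL.isClosed.measurableSet.nullMeasurableSet]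
  · apply measure_mono
    rintro _ (⟨x, hx, rfl⟩ | ⟨x, hx, rfl⟩)
    · simpa [add_comm] using hC x hx b hb
    · exact hC a ha x hx
  · refine measure_mono_null (t := {a + b}) ?_ (by simp)
    rintro _ ⟨⟨x, hx, rfl⟩, ⟨y, hy, hxy⟩⟩
    have := ha' hx
    have := hb' hy
    simp only [Set.mem_singleton_iff] at *
    linarith

lemma bm1 {A B C : Set ℝ} (hA : MeasurableSet A) (hB : MeasurableSet B) (hAn : A.Nonempty)
    (hBn : B.Nonempty) (hC : ∀ x ∈ A, ∀ y ∈ B, x + y ∈ C) :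
    volume A + volume B ≤ volume C := by
  obtain ⟨a, ha⟩ := hAn
  obtain ⟨b, hb⟩ := hBn
  rw [hA.measure_eq_iSup_isCompact, hB.measure_eq_iSup_isCompact]
  simp only [iSup_and']
  refine ENNReal.biSup_add_biSup_le' ⟨∅, by simp⟩ ⟨∅, by simp⟩ ?_
  rintro K ⟨hKA, hK⟩ L ⟨hLB, hL⟩
  refine le_trans (add_le_add (measure_mono (Set.subset_insert a K))
    (measure_mono (Set.subset_insert b L))) ?_
  refine bm1_compact (hK.insert a) (hL.insert b) (by simp) (by simp) ?_
  intro x hx y hy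
  refine hC x ?_ y ?_
  · rcases hx with rfl | hx
    exacts [ha, hKA hx]
  · rcases hy with rfl | hy
    exacts [hb, hLB hy]

lemma bm1_weighted {A B C : Set ℝ} (hA : MeasurableSet A) (hB : MeasurableSet B) (hAn : A.Nonempty)
    (hBn : B.Nonempty) {l m : ℝ} (hl : 0 < l) (hm : 0 < m)
    (hC : ∀ x ∈ A, ∀ y ∈ B, l * x + m * y ∈ C) :
    ENNReal.ofReal l * volume A + ENNReal.ofReal m * volume B ≤ volume C := by
  have h := bm1 (A := l • A) (B := m • B) (C := C) (hA.const_smul₀ l) (hB.const_smul₀ m)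
    (hAn.image _) (hBn.image _) (by
      rintro _ ⟨x, hx, rfl⟩ _ ⟨y, hy, rfl⟩
      exact hC x hx y hy)
  simpa [Measure.addHaar_smul, abs_of_pos hl, abs_of_pos hm] using h

lemma layer_le_one {α : Type*} [MeasurableSpace α] (μ : Measure α) (f : α → ℝ≥0∞)
    (hf : Measurable f) (h1 : ∀ x, f x ≤ 1) :
    ∫⁻ x, f x ∂μ = ∫⁻ s in Set.Ioo (0:ℝ) 1, μ {x | ENNReal.ofReal s < f x} := by
  have hfin : ∀ x, f x ≠ ∞ := fun x => ne_top_of_le_ne_top ENNReal.one_ne_top (h1 x)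
  have e1 : ∫⁻ x, f x ∂μ = ∫⁻ x, ENNReal.ofReal ((f x).toReal) ∂μ := by
    simp [ENNReal.ofReal_toReal (hfin _)]
  rw [e1, lintegral_eq_lintegral_meas_lt μ (Eventually.of_forall fun x => ENNReal.toReal_nonneg)
    hf.ennreal_toReal.aemeasurable]
  have e2 : ∀ s ∈ Set.Ioi (0:ℝ), {x | s < (f x).toReal} = {x | ENNReal.ofReal s < f x} := by
    intro s hs
    ext x
    simp only [Set.mem_ofPred_eq]
    exact (ENNReal.ofReal_lt_iff_lt_toReal (le_of_lt hs) (hfin x)).symm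
  rw [setLIntegral_congr_fun measurableSet_Ioi (fun s hs => by rw [e2 s hs])]
  symm
  have hsub : Set.Ioo (0:ℝ) 1 ⊆ Set.Ioi 0 := fun s hs => hs.1
  rw [← Set.inter_eq_self_of_subset_left hsub,
    ← setLIntegral_indicator measurableSet_Ioo]
  refine setLIntegral_congr_fun measurableSet_Ioi fun s hs0 => ?_
  by_cases hs1 : s ∈ Set.Ioo (0:ℝ) 1
  · simp [Set.indicator_of_mem hs1]
  rw [Set.indicator_of_notMem hs1]
  have hs : s ∈ Set.Ioi (0:ℝ) \ Set.Ioo 0 1 := ⟨hs0, hs1⟩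
  have : {x | ENNReal.ofReal s < f x} = ∅ := by
    ext x
    simp only [Set.mem_ofPred_eq, Set.mem_empty_iff_false, iff_false, not_lt]
    have h : (1:ℝ) ≤ s := by
      by_contra hh
      exact hs.2 ⟨hs.1, not_le.1 hh⟩
    refine (h1 x).trans ?_
    simpa using ENNReal.ofReal_le_ofReal h
  simp [this]

lemma amgm_enn (x y : ℝ≥0∞) {l m : ℝ} (hl : 0 < l) (hm : 0 < m) (hlm : l + m = 1) :
    x ^ l * y ^ m ≤ ENNReal.ofReal l * x + ENNReal.ofReal m * y := by
  induction x with
  | top => simp [hl]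
  | coe x =>
    induction y with
    | top => simp [hm]
    | coe y =>
      have := NNReal.geom_mean_le_arith_mean2_weighted ⟨l, hl.le⟩ ⟨m, hm.le⟩ x y
        (by ext; exact hlm)
      rw [← ENNReal.coe_rpow_of_nonneg _ hl.le, ← ENNReal.coe_rpow_of_nonneg _ hm.le,
        ENNReal.ofReal_eq_coe_nnreal hl.le, ENNReal.ofReal_eq_coe_nnreal hm.le]
      exact_mod_cast this

lemma pl1_norm {l m : ℝ} (hl : 0 < l) (hm : 0 < m) (hlm : l + m = 1) (f g h : ℝ → ℝ≥0∞)
    (hf : Measurable f) (hg : Measurable g) (hh : Measurable h)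
    (hf1 : ⨆ x, f x = 1) (hg1 : ⨆ x, g x = 1)
    (H : ∀ x y, f x ^ l * g y ^ m ≤ h (l * x + m * y)) :
    (∫⁻ x, f x) ^ l * (∫⁻ x, g x) ^ m ≤ ∫⁻ x, h x := by
  have hf2 : ∀ x, f x ≤ 1 := fun x => hf1 ▸ le_iSup f x
  have hg2 : ∀ x, g x ≤ 1 := fun x => hg1 ▸ le_iSup g x
  refine (amgm_enn _ _ hl hm hlm).trans ?_
  have hh' : ∫⁻ x, min (h x) 1 ≤ ∫⁻ x, h x := lintegral_mono fun x => min_le_left _ _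
  refine le_trans ?_ hh'
  rw [layer_le_one volume f hf hf2, layer_le_one volume g hg hg2,
    layer_le_one volume (fun x => min (h x) 1) (hh.min measurable_const) (fun x => min_le_right _ _)]
  have mm : ∀ f : ℝ → ℝ≥0∞, Measurable (fun s : ℝ => volume {x | ENNReal.ofReal s < f x}) := by
    intro f
    refine Antitone.measurable ?_
    intro s t hst
    exact measure_mono fun x hx => lt_of_le_of_lt (ENNReal.ofReal_le_ofReal hst) hx
  rw [← lintegral_const_mul _ (mm f), ← lintegral_const_mul _ (mm g),
    ← lintegral_add_left ((mm f).const_mul _)]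
  refine setLIntegral_mono' measurableSet_Ioo ?_
  intro s hs
  have hs1 : ENNReal.ofReal s < 1 := by simpa using hs.2
  have hs0 : 0 < ENNReal.ofReal s := by simpa using hs.1
  refine bm1_weighted (measurableSet_lt measurable_const hf) (measurableSet_lt measurable_const hg)
    ?_ ?_ hl hm ?_
  · rw [← hf1] at hs1
    obtain ⟨x, hx⟩ := lt_iSup_iff.1 hs1
    exact ⟨x, hx⟩
  · rw [← hg1] at hs1
    obtain ⟨x, hx⟩ := lt_iSup_iff.1 hs1
    exact ⟨x, hx⟩
  · intro x hx y hy
    simp only [Set.mem_ofPred_eq] at hx hy ⊢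
    refine lt_min (lt_of_lt_of_le ?_ (H x y)) hs1
    calc ENNReal.ofReal s = ENNReal.ofReal s ^ l * ENNReal.ofReal s ^ m := by
          rw [← ENNReal.rpow_add _ _ hs0.ne' ENNReal.ofReal_ne_top, hlm, ENNReal.rpow_one]
      _ < f x ^ l * g y ^ m :=
          ENNReal.mul_lt_mul (ENNReal.rpow_lt_rpow hx hl) (ENNReal.rpow_lt_rpow hy hm)

lemma pl1_bdd {l m : ℝ} (hl : 0 < l) (hm : 0 < m) (hlm : l + m = 1) (f g h : ℝ → ℝ≥0∞)
    (hf : Measurable f) (hg : Measurable g) (hh : Measurable h)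
    (hf1 : ⨆ x, f x ≠ ∞) (hg1 : ⨆ x, g x ≠ ∞)
    (H : ∀ x y, f x ^ l * g y ^ m ≤ h (l * x + m * y)) :
    (∫⁻ x, f x) ^ l * (∫⁻ x, g x) ^ m ≤ ∫⁻ x, h x := by
  set P := ⨆ x, f x with hP
  set Q := ⨆ x, g x with hQ
  by_cases hP0 : P = 0
  · have : ∀ x, f x = 0 := fun x => le_antisymm (hP0 ▸ le_iSup f x) bot_le
    simp [this, hl]
  by_cases hQ0 : Q = 0
  · have : ∀ x, g x = 0 := fun x => le_antisymm (hQ0 ▸ le_iSup g x) bot_le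
    simp [this, hm]
  have key := pl1_norm hl hm hlm (fun x => P⁻¹ * f x) (fun x => Q⁻¹ * g x)
    (fun x => (P⁻¹ ^ l * Q⁻¹ ^ m) * h x) (hf.const_mul _) (hg.const_mul _) (hh.const_mul _)
    (by rw [← ENNReal.mul_iSup]; exact ENNReal.inv_mul_cancel hP0 hf1)
    (by rw [← ENNReal.mul_iSup]; exact ENNReal.inv_mul_cancel hQ0 hg1)
    (by
      intro x y
      rw [ENNReal.mul_rpow_of_nonneg _ _ hl.le, ENNReal.mul_rpow_of_nonneg _ _ hm.le,
        mul_mul_mul_comm]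
      gcongr
      exact H x y)
  rw [lintegral_const_mul _ hf, lintegral_const_mul _ hg, lintegral_const_mul _ hh,
    ENNReal.mul_rpow_of_nonneg _ _ hl.le, ENNReal.mul_rpow_of_nonneg _ _ hm.le,
        mul_mul_mul_comm] at key
  refine (ENNReal.mul_le_mul_iff_right ?_ ?_).1 key
  · have h1 : P⁻¹ ^ l ≠ 0 := by simp [ENNReal.rpow_eq_zero_iff, hl, hl.le, hf1]
    have h2 : Q⁻¹ ^ m ≠ 0 := by simp [ENNReal.rpow_eq_zero_iff, hm, hm.le, hg1]
    exact mul_ne_zero h1 h2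
  · refine ENNReal.mul_ne_top ?_ ?_
    · exact ENNReal.rpow_ne_top_of_nonneg hl.le (ENNReal.inv_ne_top.2 hP0)
    · exact ENNReal.rpow_ne_top_of_nonneg hm.le (ENNReal.inv_ne_top.2 hQ0)

lemma trunc_tendsto (f : ℝ → ℝ≥0∞) (hf : Measurable f) :
    Tendsto (fun k : ℕ => ∫⁻ x, min (f x) k) atTop (𝓝 (∫⁻ x, f x)) := by
  refine lintegral_tendsto_of_tendsto_of_monotone
    (fun k => (hf.min measurable_const).aemeasurable) ?_ ?_
  · refine Eventually.of_forall fun x i j hij => ?_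
    exact min_le_min le_rfl (by exact_mod_cast hij)
  · refine Eventually.of_forall fun x => ?_
    have := (tendsto_const_nhds (x := f x) (f := atTop (α := ℕ))).min ENNReal.tendsto_nat_nhds_top
    simpa using this

lemma pl1 {l m : ℝ} (hl : 0 < l) (hm : 0 < m) (hlm : l + m = 1) (f g h : ℝ → ℝ≥0∞)
    (hf : Measurable f) (hg : Measurable g) (hh : Measurable h)
    (H : ∀ x y, f x ^ l * g y ^ m ≤ h (l * x + m * y)) :
    (∫⁻ x, f x) ^ l * (∫⁻ x, g x) ^ m ≤ ∫⁻ x, h x := by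
  by_cases hf0 : ∫⁻ x, f x = 0
  · simp [hf0, hl]
  by_cases hg0 : ∫⁻ x, g x = 0
  · simp [hg0, hm]
  have t : Tendsto (fun k : ℕ => (∫⁻ x, min (f x) k) ^ l * (∫⁻ x, min (g x) k) ^ m) atTop
      (𝓝 ((∫⁻ x, f x) ^ l * (∫⁻ x, g x) ^ m)) := by
    refine ENNReal.Tendsto.mul ((trunc_tendsto f hf).ennrpow_const l) ?_
      ((trunc_tendsto g hg).ennrpow_const m) ?_
    · left; simp [ENNReal.rpow_eq_zero_iff, hf0, hl.not_gt]
    · left; simp [ENNReal.rpow_eq_zero_iff, hg0, hm.not_gt]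
  refine le_of_tendsto' t fun k => ?_
  refine pl1_bdd hl hm hlm _ _ _ (hf.min measurable_const) (hg.min measurable_const) hh ?_ ?_ ?_
  · exact ne_top_of_le_ne_top (ENNReal.natCast_ne_top k) (iSup_le fun x => min_le_right _ _)
  · exact ne_top_of_le_ne_top (ENNReal.natCast_ne_top k) (iSup_le fun x => min_le_right _ _)
  · intro x y
    refine le_trans ?_ (H x y)
    gcongr
    · exact min_le_left _ _
    · exact min_le_left _ _

lemma cons_eq (n : ℕ) (s : ℝ) (y : Fin n → ℝ) :
    (MeasurableEquiv.piFinSuccAbove (fun _ : Fin (n+1) => ℝ) 0).symm (s, y) = Fin.cons s y := by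
  ext i
  simp [MeasurableEquiv.piFinSuccAbove]

lemma lint_succ (n : ℕ) (f : (Fin (n+1) → ℝ) → ℝ≥0∞) (hf : Measurable f) :
    ∫⁻ x, f x = ∫⁻ s : ℝ, ∫⁻ y : Fin n → ℝ, f (Fin.cons s y) := by
  have e := (volume_preserving_piFinSuccAbove (fun _ : Fin (n+1) => ℝ) 0).symm
  rw [← e.lintegral_comp hf, Measure.volume_eq_prod, lintegral_prod]
  · simp only [cons_eq]
  · exact (hf.comp e.measurable).aemeasurable

lemma meas_cons (n : ℕ) : Measurable (fun p : ℝ × (Fin n → ℝ) => (Fin.cons p.1 p.2 : Fin (n+1) → ℝ)) := by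
  have := (MeasurableEquiv.piFinSuccAbove (fun _ : Fin (n+1) => ℝ) 0).symm.measurable
  convert this using 2 with p
  exact (cons_eq n p.1 p.2).symm

theorem pl {l m : ℝ} (hl : 0 < l) (hm : 0 < m) (hlm : l + m = 1) (n : ℕ) :
    ∀ (f g h : (Fin n → ℝ) → ℝ≥0∞)
    (_ : Measurable f) (_ : Measurable g) (_ : Measurable h)
    (_ : ∀ x y, f x ^ l * g y ^ m ≤ h (l • x + m • y)),
    (∫⁻ x, f x) ^ l * (∫⁻ x, g x) ^ m ≤ ∫⁻ x, h x := by
  induction n with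
  | zero =>
    intro f g h hf hg hh H
    have := H default default
    rw [Subsingleton.elim (l • default + m • default) (default : Fin 0 → ℝ)] at this
    have e : (volume : Measure (Fin 0 → ℝ)) Set.univ = 1 := by simp [volume_pi]
    simp only [lintegral_unique, e, mul_one]
    convert this
  | succ n ih =>
    intro f g h hf hg hh H
    rw [lint_succ n f hf, lint_succ n g hg, lint_succ n h hh]
    refine pl1 hl hm hlm _ _ _ ?_ ?_ ?_ ?_
    · exact (hf.comp (meas_cons n)).lintegral_prod_right'
    · exact (hg.comp (meas_cons n)).lintegral_prod_right'
    · exact (hh.comp (meas_cons n)).lintegral_prod_right'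
    · intro s t
      have mc : ∀ s : ℝ, Measurable (fun y : Fin n → ℝ => (Fin.cons s y : Fin (n+1) → ℝ)) :=
        fun s => (meas_cons n).comp measurable_prodMk_left
      refine ih _ _ _ (hf.comp (mc s)) (hg.comp (mc t)) (hh.comp (mc _)) ?_
      intro x y
      refine (H _ _).trans (le_of_eq ?_)
      congr 1
      ext i
      refine Fin.cases ?_ (fun j => ?_) i <;> simp

lemma bm_mult (n : ℕ) {l m : ℝ} (hl : 0 < l) (hm : 0 < m) (hlm : l + m = 1)
    {A B C : Set (EuclideanSpace ℝ (Fin n))} (hA : MeasurableSet A) (hB : MeasurableSet B)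
    (hC : MeasurableSet C) (H : ∀ x ∈ A, ∀ y ∈ B, l • x + m • y ∈ C) :
    volume A ^ l * volume B ^ m ≤ volume C := by
  have e := (PiLp.volume_preserving_ofLp (Fin n)).symm (MeasurableEquiv.toLp 2 _).symm
  have me : Measurable (WithLp.toLp 2 : (Fin n → ℝ) → EuclideanSpace ℝ (Fin n)) := e.measurable
  have key : ∀ A : Set (EuclideanSpace ℝ (Fin n)), MeasurableSet A →
      ∫⁻ x : Fin n → ℝ, A.indicator 1 (WithLp.toLp 2 x) = volume A := by
    intro A hA
    have := e.lintegral_comp (f := A.indicator 1) (measurable_one.indicator hA)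
    rw [lintegral_indicator_one hA] at this
    exact this
  rw [← key A hA, ← key B hB, ← key C hC]
  refine pl hl hm hlm n _ _ _ ((measurable_one.indicator hA).comp me)
    ((measurable_one.indicator hB).comp me) ((measurable_one.indicator hC).comp me) ?_
  intro x y
  by_cases hx : WithLp.toLp 2 x ∈ A
  · by_cases hy : WithLp.toLp 2 y ∈ B
    · have := H _ hx _ hy
      have h2 : WithLp.toLp 2 (l • x + m • y) ∈ C := this
      rw [Set.indicator_of_mem hx, Set.indicator_of_mem hy, Set.indicator_of_mem h2]
      simp
    · simp [hy, hm]
  · simp [hx, hl]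

end PartOne

section PartTwo
open scoped ENNReal NNReal Pointwise

lemma bern (a b : ℝ) (ha : 0 ≤ a) (hb : 0 ≤ b) (N : ℕ) (hN : 1 ≤ N) :
    a ^ N + N * a ^ (N-1) * b ≤ (a + b) ^ N := by
  induction N, hN using Nat.le_induction with
  | base => simp
  | succ n hn ih =>
    have h1 : a ^ n = a ^ (n-1) * a := by rw [← pow_succ]; congr 1; omega
    have h3 : 0 ≤ n * a ^ (n-1) * b * b := by positivity
    have h4 := mul_le_mul_of_nonneg_right ih (add_nonneg ha hb)
    rw [← pow_succ] at h4
    simp only [Nat.add_sub_cancel, pow_succ (n := n) (a := a)]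
    push_cast
    rw [h1] at h4 ⊢
    nlinarith [h3, h4]

lemma bm_ball (N : ℕ) (hN : 1 ≤ N) {ε : ℝ} (hε : 0 < ε) {A C : Set (Euc N)}
    (hA : MeasurableSet A) (hAf : volume A ≠ ∞)
    (hC : MeasurableSet C) (H : ∀ x ∈ A, ∀ y, ‖y‖ < ε → x + y ∈ C)
    (hA0 : volume A ≠ 0) :
    volume A + ENNReal.ofReal ε * (N * volume (Metric.ball (0 : Euc N) 1) ^ ((1:ℝ)/N)
      * volume A ^ (((N:ℝ)-1)/N)) ≤ volume C := by
  have hNr : (0:ℝ) < N := by exact_mod_cast hN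
  have hB0 : volume (Metric.ball (0 : Euc N) 1) ≠ 0 := (Metric.measure_ball_pos _ _ one_pos).ne'
  have hBf : volume (Metric.ball (0 : Euc N) 1) ≠ ∞ := measure_ball_lt_top.ne
  set β := (volume (Metric.ball (0 : Euc N) 1)).toReal with hβ
  have hβ0 : 0 < β := ENNReal.toReal_pos hB0 hBf
  have hβe : volume (Metric.ball (0 : Euc N) 1) = ENNReal.ofReal β := (ENNReal.ofReal_toReal hBf).symm
  set s := (volume A).toReal with hs
  have hs0 : 0 < s := ENNReal.toReal_pos hA0 hAf
  have hse : volume A = ENNReal.ofReal s := (ENNReal.ofReal_toReal hAf).symm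
  set a := s ^ ((1:ℝ)/N) with ha
  set b := ε * β ^ ((1:ℝ)/N) with hb
  have ha0 : 0 < a := by positivity
  have hb0 : 0 < b := by positivity
  have haN : a ^ N = s := by
    rw [ha, one_div, Real.rpow_inv_natCast_pow hs0.le (by omega)]
  have hbN : b ^ N = ε ^ N * β := by
    rw [hb, mul_pow, one_div, Real.rpow_inv_natCast_pow hβ0.le (by omega)]
  have haN1 : a ^ (N-1) = s ^ (((N:ℝ)-1)/N) := by
    rw [ha, ← Real.rpow_natCast, ← Real.rpow_mul hs0.le]
    congr 1
    rw [Nat.cast_sub hN]; push_cast; ring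
  set l := a / (a + b) with hl
  set m := b / (a + b) with hm
  have hl0 : 0 < l := by positivity
  have hm0 : 0 < m := by positivity
  have hlm : l + m = 1 := by rw [hl, hm]; field_simp
  have hvA : volume (l⁻¹ • A) = ENNReal.ofReal ((a+b)^N) := by
    rw [Measure.addHaar_smul, hse, ← ENNReal.ofReal_mul (abs_nonneg _), finrank_euclideanSpace_fin,
      abs_of_pos (by positivity), ← haN, hl, ← mul_pow]
    congr 2; field_simp
  have hvB : volume (m⁻¹ • Metric.ball (0 : Euc N) ε) = ENNReal.ofReal ((a+b)^N) := by
    rw [Measure.addHaar_smul, Measure.addHaar_ball_of_pos _ _ hε, hβe, finrank_euclideanSpace_fin,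
      ← ENNReal.ofReal_mul (by positivity),
      ← ENNReal.ofReal_mul (abs_nonneg _), abs_of_pos (by positivity), ← hbN, hm, ← mul_pow]
    congr 2; field_simp
  have key := bm_mult N hl0 hm0 hlm (A := l⁻¹ • A) (B := m⁻¹ • Metric.ball (0 : Euc N) ε) (C := C)
    (hA.const_smul₀ _) (measurableSet_ball.const_smul₀ _) hC (by
      rintro _ ⟨x, hx, rfl⟩ _ ⟨y, hy, rfl⟩
      have := H x hx y (by simpa using hy)
      simpa [smul_smul, mul_inv_cancel₀ hl0.ne', mul_inv_cancel₀ hm0.ne'] using this)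
  have hpos : 0 < (a+b)^N := by positivity
  rw [hvA, hvB, ← ENNReal.rpow_add _ _ (by simpa using hpos) ENNReal.ofReal_ne_top, hlm,
    ENNReal.rpow_one] at key
  refine le_trans (le_of_eq ?_) ((ENNReal.ofReal_le_ofReal (bern a b ha0.le hb0.le N hN)).trans key)
  rw [ENNReal.ofReal_add (by positivity) (by positivity), haN, haN1, hse, hβe,
    ENNReal.ofReal_rpow_of_pos hβ0, ENNReal.ofReal_rpow_of_pos hs0, hb,
    ← ENNReal.ofReal_natCast, ← ENNReal.ofReal_mul (by positivity), ← ENNReal.ofReal_mul (by positivity),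
    ← ENNReal.ofReal_mul (by positivity)]
  congr 2
  ring

/-- Level-set lemma. -/
lemma level_lemma {α : Type*} [MeasurableSpace α] (μ : Measure α) (p : ℝ) (hp : 1 < p)
    (f : α → ℝ) (hf : Measurable f) (h0 : ∀ x, 0 ≤ f x)
    (hfin : ∫⁻ x, ENNReal.ofReal (f x) ^ p ∂μ ≠ ∞) :
    (∫⁻ x, ENNReal.ofReal (f x) ^ p ∂μ) ^ (1/p) ≤
      ∫⁻ t in Set.Ioi (0:ℝ), μ {x | t < f x} ^ (1/p) := by
  set I := ∫⁻ x, ENNReal.ofReal (f x) ^ p ∂μ with hI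
  have hp0 : 0 < p := by linarith
  by_cases hI0 : I = 0
  · rw [hI0, ENNReal.zero_rpow_of_pos (by positivity)]; exact bot_le
  set q := p / (p-1) with hq
  have hpm : 0 < p - 1 := by linarith
  have hpq : p.HolderConjugate q := Real.HolderConjugate.conjExponent hp
  have mw : Measurable (fun x => ENNReal.ofReal (f x) ^ (p-1)) :=
    (hf.ennreal_ofReal).pow_const _
  have e1 : I = ∫⁻ x, ENNReal.ofReal (f x) ∂(μ.withDensity (fun x => ENNReal.ofReal (f x) ^ (p-1))) := by
    rw [lintegral_withDensity_eq_lintegral_mul _ mw hf.ennreal_ofReal]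
    refine lintegral_congr fun x => ?_
    simp only [Pi.mul_apply]
    by_cases hx : ENNReal.ofReal (f x) = 0
    · rw [hx, ENNReal.zero_rpow_of_pos hp0, mul_zero]
    · nth_rewrite 3 [← ENNReal.rpow_one (ENNReal.ofReal (f x))]
      rw [← ENNReal.rpow_add _ _ hx ENNReal.ofReal_ne_top]
      congr 1; ring
  rw [lintegral_eq_lintegral_meas_lt _ (Eventually.of_forall h0) hf.aemeasurable] at e1
  have e2 : ∀ t : ℝ, (μ.withDensity (fun x => ENNReal.ofReal (f x) ^ (p-1))) {x | t < f x} ≤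
      μ {x | t < f x} ^ (1/p) * I ^ (1/q) := by
    intro t
    have ms : MeasurableSet {x | t < f x} := measurableSet_lt measurable_const hf
    rw [withDensity_apply _ ms, ← lintegral_indicator ms]
    have := ENNReal.lintegral_mul_le_Lp_mul_Lq μ hpq (f := {x | t < f x}.indicator 1)
      (g := fun x => ENNReal.ofReal (f x) ^ (p-1)) (measurable_one.indicator ms).aemeasurable
      mw.aemeasurable
    refine le_trans (le_of_eq ?_) (this.trans (le_of_eq ?_))
    · refine lintegral_congr fun x => ?_
      by_cases hx : x ∈ {x | t < f x}
      · simp only [Set.indicator_of_mem hx, Pi.mul_apply, Pi.one_apply, one_mul]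
      · simp only [Set.indicator_of_notMem hx, Pi.mul_apply, zero_mul]
    · congr 2
      · rw [← lintegral_indicator_one ms]
        refine lintegral_congr fun x => ?_
        by_cases hx : x ∈ {x | t < f x}
        · simp only [Set.indicator_of_mem hx, Pi.one_apply, ENNReal.one_rpow]
        · simp only [Set.indicator_of_notMem hx, ENNReal.zero_rpow_of_pos hp0]
      · rw [hI]
        refine lintegral_congr fun x => ?_
        rw [← ENNReal.rpow_mul]
        congr 1
        rw [hq]; field_simp
  have e3 : I ≤ (∫⁻ t in Set.Ioi (0:ℝ), μ {x | t < f x} ^ (1/p)) * I ^ (1/q) := by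
    rw [← lintegral_mul_const']
    · exact e1.le.trans (lintegral_mono fun t => e2 t)
    · exact ENNReal.rpow_ne_top_of_nonneg (by have := hpq.symm.pos; positivity) hfin
  have e4 : I = I ^ (1/p) * I ^ (1/q) := by
    rw [← ENNReal.rpow_add _ _ hI0 hfin, one_div, one_div, hpq.inv_add_inv_eq_one, ENNReal.rpow_one]
  nth_rewrite 1 [e4] at e3
  refine (ENNReal.mul_le_mul_iff_left ?_ ?_).1 e3
  · simp [ENNReal.rpow_eq_zero_iff, hI0, hfin]
  · exact ENNReal.rpow_ne_top_of_nonneg (by have := hpq.symm.pos; positivity) hfin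

end PartTwo

section PartThree
open scoped ENNReal NNReal Pointwise

/-- the isoperimetric constant `N |B|^{1/N}` -/
noncomputable def isoC (N : ℕ) : ℝ≥0∞ := N * volume (Metric.ball (0 : Euc N) 1) ^ ((1:ℝ)/N)

lemma isoC_ne_top (N : ℕ) : isoC N ≠ ∞ :=
  ENNReal.mul_ne_top (ENNReal.natCast_ne_top N)
    (ENNReal.rpow_ne_top_of_nonneg (by positivity) measure_ball_lt_top.ne)

lemma sob_aux (N : ℕ) (hN : 2 ≤ N) (w : Euc N → ℝ) (hw : ContDiff ℝ 1 w) (hc : HasCompactSupport w)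
    {η : ℝ} (hη : 0 < η) :
    isoC N * (∫⁻ x, ‖w x‖ₑ ^ ((N:ℝ)/((N:ℝ)-1))) ^ (((N:ℝ)-1)/N) ≤
      (∫⁻ x, ‖fderiv ℝ w x‖ₑ) + ENNReal.ofReal η * volume (Metric.cthickening 1 (tsupport w)) := by
  have hNr : (2:ℝ) ≤ N := by exact_mod_cast hN
  have hcd : Continuous (fderiv ℝ w) := hw.continuous_fderiv (by simp)
  have hcds : HasCompactSupport (fderiv ℝ w) := hc.fderiv ℝ
  obtain ⟨ε₀, hε₀, hu⟩ := Metric.uniformContinuous_iff.1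
    (hcds.uniformContinuous_of_continuous hcd) η hη
  set ε := min (ε₀/2) 1 with hε
  have hεp : 0 < ε := by positivity
  have hε1 : ε ≤ 1 := min_le_right _ _
  have hε2 : ε < ε₀ := lt_of_le_of_lt (min_le_left _ _) (by linarith)
  set K := Metric.cthickening 1 (tsupport w) with hK
  have hKm : MeasurableSet K := Metric.isClosed_cthickening.measurableSet
  have hKf : volume K ≠ ∞ := (hc.isCompact.cthickening).measure_lt_top.ne
  have hfm : Measurable (fun x => |w x|) := (hw.continuous.abs).measurable
  set G : Euc N → ℝ := fun x => |w x| + ε * K.indicator (fun x => ‖fderiv ℝ w x‖ + η) x with hG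
  have hind0 : ∀ x, 0 ≤ K.indicator (fun x => ‖fderiv ℝ w x‖ + η) x := fun x =>
    Set.indicator_nonneg (fun x _ => by positivity) x
  have hindm : Measurable (K.indicator (fun x => ‖fderiv ℝ w x‖ + η)) :=
    (Continuous.measurable (by fun_prop)).indicator hKm
  have hGm : Measurable G := hfm.add (hindm.const_mul ε)
  have hG0 : ∀ x, 0 ≤ G x := fun x => add_nonneg (abs_nonneg _) (mul_nonneg hεp.le (hind0 x))
  -- inclusion of level sets
  have hincl : ∀ t : ℝ, 0 < t → ∀ x ∈ {x | t < |w x|}, ∀ y, ‖y‖ < ε → x + y ∈ {x | t < G x} := by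
    intro t ht x hx y hy
    simp only [Set.mem_ofPred_eq] at hx ⊢
    have hxs : x ∈ tsupport w := by
      apply subset_tsupport
      rw [Function.mem_support]
      intro h0
      rw [h0] at hx; simp at hx; linarith
    have hxy : x + y ∈ K := by
      apply Metric.mem_cthickening_of_dist_le _ x _ _ hxs
      simpa using hy.le.trans hε1
    have hmv : ‖w x - w (x+y)‖ ≤ (‖fderiv ℝ w (x+y)‖ + η) * ‖x - (x+y)‖ := by
      refine (convex_ball (x+y) ε).norm_image_sub_le_of_norm_fderiv_le (𝕜 := ℝ)
        (fun z _ => hw.differentiable (by simp) z) ?_ (by simpa using hεp) (by simpa using hy)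
      intro z hz
      have h1 : dist (fderiv ℝ w z) (fderiv ℝ w (x+y)) < η :=
        hu (lt_trans (by simpa using hz) hε2)
      rw [dist_eq_norm] at h1
      have := norm_le_norm_add_norm_sub' (fderiv ℝ w z) (fderiv ℝ w (x+y))
      linarith
    have h3 : ‖x - (x+y)‖ = ‖y‖ := by simp
    rw [h3, Real.norm_eq_abs] at hmv
    simp only [hG, Set.indicator_of_mem hxy]
    have h4 : (‖fderiv ℝ w (x+y)‖ + η) * ‖y‖ ≤ ε * (‖fderiv ℝ w (x+y)‖ + η) := by
      rw [mul_comm]; gcongr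
    have h5 := abs_sub_abs_le_abs_sub (w x) (w (x+y))
    linarith
  have hlev : ∀ t : ℝ, 0 < t → volume {x | t < |w x|} + ENNReal.ofReal ε * (isoC N
      * volume {x | t < |w x|} ^ (((N:ℝ)-1)/N)) ≤ volume {x | t < G x} := by
    intro t ht
    by_cases h0 : volume {x | t < |w x|} = 0
    · rw [h0, ENNReal.zero_rpow_of_pos (by apply div_pos <;> linarith)]; simp
    · refine bm_ball N (by omega) hεp (measurableSet_lt measurable_const hfm) ?_
        (measurableSet_lt measurable_const hGm) (hincl t ht) h0
      refine ne_top_of_le_ne_top hc.isCompact.measure_lt_top.ne (measure_mono ?_)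
      intro x hx
      apply subset_tsupport
      rw [Function.mem_support]
      intro h0
      simp only [Set.mem_ofPred_eq] at hx
      rw [h0] at hx; simp at hx; linarith
  have hInt := setLIntegral_mono' (μ := volume) measurableSet_Ioi hlev
  have mA : Measurable (fun t : ℝ => volume {x | t < |w x|}) :=
    Antitone.measurable fun s t hst => measure_mono fun x hx => lt_of_le_of_lt hst hx
  rw [lintegral_add_left mA, lintegral_const_mul _ ((mA.pow_const _).const_mul _),
    lintegral_const_mul _ (mA.pow_const _),
    ← lintegral_eq_lintegral_meas_lt volume (Eventually.of_forall hG0) hGm.aemeasurable,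
    ← lintegral_eq_lintegral_meas_lt volume (Eventually.of_forall fun x => abs_nonneg _)
      hfm.aemeasurable] at hInt
  have hGint : ∫⁻ x, ENNReal.ofReal (G x) = (∫⁻ x, ENNReal.ofReal |w x|) +
      ENNReal.ofReal ε * ((∫⁻ x in K, ‖fderiv ℝ w x‖ₑ) + ENNReal.ofReal η * volume K) := by
    have : ∀ x, ENNReal.ofReal (G x) = ENNReal.ofReal |w x| +
        ENNReal.ofReal ε * K.indicator (fun x => ‖fderiv ℝ w x‖ₑ + ENNReal.ofReal η) x := by
      intro x
      rw [hG, ENNReal.ofReal_add (abs_nonneg _) (mul_nonneg hεp.le (hind0 x)),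
        ENNReal.ofReal_mul hεp.le]
      congr 2
      by_cases hx : x ∈ K
      · rw [Set.indicator_of_mem hx, Set.indicator_of_mem hx, ENNReal.ofReal_add (norm_nonneg _) hη.le,
          ofReal_norm]
      · rw [Set.indicator_of_notMem hx, Set.indicator_of_notMem hx, ENNReal.ofReal_zero]
    have m2 : Measurable (fun x => ‖fderiv ℝ w x‖ₑ) := hcd.enorm.measurable
    rw [lintegral_congr this, lintegral_add_left hfm.ennreal_ofReal,
      lintegral_const_mul _ ((m2.add_const _).indicator hKm), lintegral_indicator hKm,
      lintegral_add_left m2, setLIntegral_const]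
  rw [hGint] at hInt
  have hwint : ∫⁻ x, ENNReal.ofReal |w x| ≠ ∞ := by
    have := (hw.continuous.integrable_of_hasCompactSupport (μ := volume) hc).2
    simpa [HasFiniteIntegral, ← ofReal_norm] using this.ne
  have h6 := (ENNReal.add_le_add_iff_left hwint).1 hInt
  have h7 := (ENNReal.mul_le_mul_iff_right (by simpa using hεp) ENNReal.ofReal_ne_top).1 h6
  have hp1 : 1 < (N:ℝ)/((N:ℝ)-1) := by rw [lt_div_iff₀] <;> linarith
  have hpi : 1 / ((N:ℝ)/((N:ℝ)-1)) = ((N:ℝ)-1)/N := by rw [one_div, inv_div]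
  have hconv : ∀ x, ‖w x‖ₑ = ENNReal.ofReal |w x| := fun x => by
    rw [← Real.norm_eq_abs, ofReal_norm]
  have hfin : ∫⁻ x, ENNReal.ofReal |w x| ^ ((N:ℝ)/((N:ℝ)-1)) ≠ ∞ := by
    have h8 : MemLp w (ENNReal.ofReal ((N:ℝ)/((N:ℝ)-1))) volume :=
      hw.continuous.memLp_of_hasCompactSupport hc
    have h9 := lintegral_rpow_enorm_lt_top_of_eLpNorm_lt_top (f := w) (μ := volume)
      (p := ENNReal.ofReal ((N:ℝ)/((N:ℝ)-1)))
      (by simp; linarith) ENNReal.ofReal_ne_top h8.2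
    rw [ENNReal.toReal_ofReal (by linarith)] at h9
    simpa only [hconv] using h9.ne
  have h10 := level_lemma volume _ hp1 (fun x => |w x|) hfm (fun x => abs_nonneg _) hfin
  rw [hpi] at h10
  simp only [hconv]
  refine (mul_le_mul_right h10 _).trans (h7.trans ?_)
  gcongr
  exact Measure.restrict_le_self

lemma sob_smooth (N : ℕ) (hN : 2 ≤ N) (w : Euc N → ℝ) (hw : ContDiff ℝ 1 w) (hc : HasCompactSupport w) :
    isoC N * (∫⁻ x, ‖w x‖ₑ ^ ((N:ℝ)/((N:ℝ)-1))) ^ (((N:ℝ)-1)/N) ≤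
      (∫⁻ x, ‖fderiv ℝ w x‖ₑ) := by
  have hKf : volume (Metric.cthickening 1 (tsupport w)) ≠ ∞ :=
    (hc.isCompact.cthickening).measure_lt_top.ne
  have t : Tendsto (fun η : ℝ => (∫⁻ x, ‖fderiv ℝ w x‖ₑ) +
      ENNReal.ofReal η * volume (Metric.cthickening 1 (tsupport w))) (𝓝[>] 0)
      (𝓝 ((∫⁻ x, ‖fderiv ℝ w x‖ₑ) +
      ENNReal.ofReal 0 * volume (Metric.cthickening 1 (tsupport w)))) := by
    refine Tendsto.add tendsto_const_nhds (ENNReal.Tendsto.mul_const ?_ (Or.inr hKf))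
    exact (ENNReal.continuous_ofReal.tendsto 0).mono_left nhdsWithin_le_nhds
  simp only [ENNReal.ofReal_zero, zero_mul, add_zero] at t
  exact ge_of_tendsto t (eventually_mem_nhdsWithin.mono fun η hη => sob_aux N hN w hw hc hη)

end PartThree

section PartFour
open scoped ENNReal NNReal Pointwise

/-- divergence -/
noncomputable def dvg (N : ℕ) (ψ : Euc N → Euc N) (x : Euc N) : ℝ :=
  ∑ i, fderiv ℝ (fun y => ψ y i) x (EuclideanSpace.single i 1)

lemma coord_contDiff {N : ℕ} {ψ : Euc N → Euc N} {k : WithTop ℕ∞} (h : ContDiff ℝ k ψ) (i : Fin N) :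
    ContDiff ℝ k (fun y => ψ y i) := contDiff_euclidean.1 h i

lemma coord_compact {N : ℕ} {ψ : Euc N → Euc N} (h : HasCompactSupport ψ) (i : Fin N) :
    HasCompactSupport (fun y => ψ y i) :=
  h.comp_left (g := fun v : Euc N => v i) (by simp)

lemma dvg_continuous {N : ℕ} {ψ : Euc N → Euc N} (h : ContDiff ℝ 1 ψ) : Continuous (dvg N ψ) := by
  unfold dvg
  refine continuous_finsetSum _ fun i _ => ?_
  exact ((coord_contDiff h i).continuous_fderiv (by simp)).clm_apply continuous_const

lemma dvg_compact {N : ℕ} {ψ : Euc N → Euc N} (h : HasCompactSupport ψ) :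
    HasCompactSupport (dvg N ψ) := by
  refine HasCompactSupport.intro h.isCompact ?_
  intro x hx
  unfold dvg
  refine Finset.sum_eq_zero fun i _ => ?_
  have : x ∉ tsupport (fun y => ψ y i) := fun hh => hx (tsupport_comp_subset (g := fun v : Euc N => v i) (by simp) ψ hh)
  rw [fderiv_of_notMem_tsupport ℝ this]
  simp

lemma clm_expand {N : ℕ} (L : Euc N →L[ℝ] ℝ) (v : Euc N) :
    L v = ∑ i, L (EuclideanSpace.single i 1) * v i := by
  conv_lhs => rw [← (EuclideanSpace.basisFun (Fin N) ℝ).sum_repr v]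
  simp [map_sum, mul_comm]

lemma dvg_mul {N : ℕ} {ψ : Euc N → Euc N} (h : ContDiff ℝ 1 ψ) {η : Euc N → ℝ} (hη : ContDiff ℝ 1 η)
    (x : Euc N) : dvg N (fun y => η y • ψ y) x = η x * dvg N ψ x + fderiv ℝ η x (ψ x) := by
  unfold dvg
  rw [clm_expand (fderiv ℝ η x), Finset.mul_sum, ← Finset.sum_add_distrib]
  refine Finset.sum_congr rfl fun i _ => ?_
  simp only [PiLp.smul_apply, smul_eq_mul]
  rw [fderiv_fun_mul (hη.differentiable (by simp) x) ((coord_contDiff h i).differentiable (by simp) x)]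
  simp
  ring

lemma ibp {N : ℕ} {ψ : Euc N → Euc N} (h : ContDiff ℝ 1 ψ) (hc : HasCompactSupport ψ)
    {w : Euc N → ℝ} (hw : ContDiff ℝ 1 w) :
    ∫ x, w x * dvg N ψ x = - ∫ x, fderiv ℝ w x (ψ x) := by
  have hwc := hw.continuous
  have hwd : ∀ v, Continuous fun x => fderiv ℝ w x v := fun v =>
    (hw.continuous_fderiv (by simp)).clm_apply continuous_const
  have hpc := fun i => (coord_contDiff h i).continuous
  have hpd : ∀ i v, Continuous fun x => fderiv ℝ (fun y => ψ y i) x v := fun i v =>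
    ((coord_contDiff h i).continuous_fderiv (by simp)).clm_apply continuous_const
  have hpcs := fun i => coord_compact hc i
  have hpds : ∀ i v, HasCompactSupport fun x => fderiv ℝ (fun y => ψ y i) x v := fun i v =>
    (hpcs i).fderiv_apply ℝ v
  simp only [dvg, clm_expand (fderiv ℝ w _) (ψ _), Finset.mul_sum]
  rw [integral_finsetSum, integral_finsetSum, ← Finset.sum_neg_distrib]
  · refine Finset.sum_congr rfl fun i _ => ?_
    refine integral_mul_fderiv_eq_neg_fderiv_mul_of_integrable ?_ ?_ ?_
      (fun x _ => hw.differentiable (by simp) x)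
      (fun x _ => (coord_contDiff h i).differentiable (by simp) x)
    · exact ((hwd _).mul (hpc i)).integrable_of_hasCompactSupport ((hpcs i).mul_left)
    · exact (hwc.mul (hpd i _)).integrable_of_hasCompactSupport ((hpds i _).mul_left)
    · exact (hwc.mul (hpc i)).integrable_of_hasCompactSupport ((hpcs i).mul_left)
  · intro i _
    exact ((hwd _).mul (hpc i)).integrable_of_hasCompactSupport ((hpcs i).mul_left)
  · intro i _
    exact (hwc.mul (hpd i _)).integrable_of_hasCompactSupport ((hpds i _).mul_left)

lemma real_ineq (g δ : ℝ) (hg : 0 ≤ g) (hδ : 0 < δ) : g - δ ≤ g ^ 2 / √(g^2 + δ^2) := by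
  have h1 : √(g^2 + δ^2) ≤ g + δ := by
    rw [Real.sqrt_le_left (by positivity)]; nlinarith
  have h0 : 0 < √(g^2 + δ^2) := by positivity
  rw [le_div_iff₀ h0]
  by_cases h : g ≤ δ
  · nlinarith [sq_nonneg g]
  · nlinarith [sq_nonneg δ]

lemma tv_smooth_aux {N : ℕ} {w : Euc N → ℝ} (hw : ContDiff ℝ 2 w) (hc : HasCompactSupport w) {T : ℝ}
    (hT : ∀ r ∈ TVSet N w, r ≤ T) {δ : ℝ} (hδ : 0 < δ) :
    ∫ x, ‖fderiv ℝ w x‖ ≤ T + δ * (volume (tsupport w)).toReal := by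
  have hw1 : ContDiff ℝ 1 w := hw.of_le (by norm_num)
  obtain ⟨g, hg⟩ : ∃ g : Euc N → Euc N,
      g = fun x => (InnerProductSpace.toDual ℝ (Euc N)).symm (fderiv ℝ w x) := ⟨_, rfl⟩
  have hgn : ∀ x, ‖g x‖ = ‖fderiv ℝ w x‖ := fun x => by simp [hg]
  have hgc : ContDiff ℝ 1 g := by
    have h1 : ContDiff ℝ 1 (fderiv ℝ w) := hw.fderiv_right (by norm_num)
    rw [hg]
    exact ((InnerProductSpace.toDual ℝ (Euc N)).symm.contDiff).comp h1
  have hgapp : ∀ x, fderiv ℝ w x (g x) = ‖fderiv ℝ w x‖^2 := by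
    intro x
    rw [← InnerProductSpace.toDual_symm_apply (𝕜 := ℝ) (x := g x), ← hgn]
    have : (InnerProductSpace.toDual ℝ (Euc N)).symm (fderiv ℝ w x) = g x := by rw [hg]
    rw [this]
    exact real_inner_self_eq_norm_sq _
  have hSpos : ∀ x, 0 < ‖g x‖^2 + δ^2 := fun x => by positivity
  obtain ⟨ψ, hψ⟩ : ∃ ψ : Euc N → Euc N, ψ = fun x => (-(√(‖g x‖^2 + δ^2))⁻¹) • g x := ⟨_, rfl⟩
  have hψc : ContDiff ℝ 1 ψ := by
    rw [hψ]
    refine ContDiff.smul (ContDiff.neg (ContDiff.inv (ContDiff.sqrt ?_ fun x => (hSpos x).ne') ?_)) hgc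
    · exact (hgc.norm_sq ℝ).add contDiff_const
    · intro x; exact (Real.sqrt_pos.2 (hSpos x)).ne'
  have hgs : HasCompactSupport g := by
    rw [hg]; exact (hc.fderiv ℝ).comp_left (g := (InnerProductSpace.toDual ℝ (Euc N)).symm) (by simp)
  have hψs : HasCompactSupport ψ := by
    refine HasCompactSupport.intro hgs.isCompact fun x hx => ?_
    rw [hψ]
    simp only [image_eq_zero_of_notMem_tsupport hx, smul_zero]
  have hψ1 : ∀ x, ‖ψ x‖ ≤ 1 := by
    intro x
    rw [hψ]
    simp only [norm_smul, norm_neg, norm_inv, Real.norm_eq_abs, abs_of_nonneg (Real.sqrt_nonneg _)]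
    rw [inv_mul_le_iff₀ (Real.sqrt_pos.2 (hSpos x)), mul_one]
    apply Real.le_sqrt_of_sq_le
    nlinarith
  have h1 := hT _ ⟨ψ, hψc, hψs, hψ1, rfl⟩
  have h2 := ibp hψc hψs hw1
  unfold dvg at h2
  rw [h2, ← integral_neg] at h1
  have h3 : ∀ x, - fderiv ℝ w x (ψ x) = ‖fderiv ℝ w x‖^2 / √(‖fderiv ℝ w x‖^2 + δ^2) := by
    intro x
    rw [hψ]
    simp only [map_smul, hgapp, hgn, smul_eq_mul]
    ring
  simp only [h3] at h1
  have hdc : Continuous (fderiv ℝ w) := hw1.continuous_fderiv (by simp)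
  have hds : HasCompactSupport (fderiv ℝ w) := hc.fderiv ℝ
  have i1 : Integrable (fun x => ‖fderiv ℝ w x‖) :=
    hdc.norm.integrable_of_hasCompactSupport hds.norm
  have i2 : Integrable ((tsupport w).indicator (fun _ => δ)) :=
    (integrable_indicator_iff (isClosed_tsupport w).measurableSet).2
      (integrableOn_const hc.isCompact.measure_lt_top.ne)
  have i3 : Integrable (fun x => ‖fderiv ℝ w x‖^2 / √(‖fderiv ℝ w x‖^2 + δ^2)) := by
    refine Continuous.integrable_of_hasCompactSupport ?_ ?_
    · refine Continuous.div (by fun_prop) (by fun_prop) fun x => ?_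
      have : 0 < ‖fderiv ℝ w x‖^2 + δ^2 := by positivity
      exact (Real.sqrt_pos.2 this).ne'
    · exact hds.comp_left (g := fun L : Euc N →L[ℝ] ℝ => ‖L‖^2 / √(‖L‖^2 + δ^2)) (by simp)
  have h4 : ∫ x, ‖fderiv ℝ w x‖ ≤
      ∫ x, (‖fderiv ℝ w x‖^2 / √(‖fderiv ℝ w x‖^2 + δ^2) + (tsupport w).indicator (fun _ => δ) x) := by
    refine integral_mono i1 (i3.add i2) fun x => ?_
    simp only [Pi.add_apply]
    by_cases hx : x ∈ tsupport w
    · rw [Set.indicator_of_mem hx]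
      have := real_ineq ‖fderiv ℝ w x‖ δ (norm_nonneg _) hδ
      linarith
    · rw [Set.indicator_of_notMem hx, fderiv_of_notMem_tsupport ℝ hx]
      simp
  rw [integral_add i3 i2, integral_indicator (isClosed_tsupport w).measurableSet,
    setIntegral_const, smul_eq_mul, mul_comm _ δ] at h4
  simp only [Measure.real] at h4
  linarith

lemma tv_smooth {N : ℕ} {w : Euc N → ℝ} (hw : ContDiff ℝ 2 w) (hc : HasCompactSupport w) {T : ℝ}
    (hT : ∀ r ∈ TVSet N w, r ≤ T) : ∫⁻ x, ‖fderiv ℝ w x‖ₑ ≤ ENNReal.ofReal T := by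
  have hw1 : ContDiff ℝ 1 w := hw.of_le (by norm_num)
  have i1 : Integrable (fun x => fderiv ℝ w x) :=
    (hw1.continuous_fderiv (by simp)).integrable_of_hasCompactSupport (hc.fderiv ℝ)
  have h : ∫ x, ‖fderiv ℝ w x‖ ≤ T := by
    have t : Tendsto (fun δ : ℝ => T + δ * (volume (tsupport w)).toReal) (𝓝[>] 0)
        (𝓝 (T + 0 * (volume (tsupport w)).toReal)) :=
      (Continuous.tendsto (by fun_prop) 0).mono_left nhdsWithin_le_nhds
    rw [zero_mul, add_zero] at t
    exact ge_of_tendsto t (eventually_mem_nhdsWithin.mono fun δ hδ => tv_smooth_aux hw hc hT hδ)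
  rw [← ofReal_integral_norm_eq_lintegral_enorm i1]
  exact ENNReal.ofReal_le_ofReal h

lemma sob_smooth_tv (N : ℕ) (hN : 2 ≤ N) (w : Euc N → ℝ) (hw : ContDiff ℝ 2 w)
    (hc : HasCompactSupport w) {T : ℝ} (hT : ∀ r ∈ TVSet N w, r ≤ T) :
    isoC N * (∫⁻ x, ‖w x‖ₑ ^ ((N:ℝ)/((N:ℝ)-1))) ^ (((N:ℝ)-1)/N) ≤ ENNReal.ofReal T :=
  (sob_smooth N hN w (hw.of_le (by norm_num)) hc).trans (tv_smooth hw hc hT)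

end PartFour

section PartFive
open scoped ENNReal NNReal Pointwise Convolution

lemma tv_cutoff {N : ℕ} {u : Euc N → ℝ} (hu : Integrable u) {T : ℝ} (hT : ∀ r ∈ TVSet N u, r ≤ T)
    {η : Euc N → ℝ} (hη : ContDiff ℝ 1 η) (h0 : ∀ x, |η x| ≤ 1) {L : ℝ}
    (hL : ∀ x, ‖fderiv ℝ η x‖ ≤ L) :
    ∀ r ∈ TVSet N (fun x => η x * u x), r ≤ T + L * ∫ x, |u x| := by
  rintro r ⟨ψ, hψ, hψs, hψ1, rfl⟩
  change ∫ x, η x * u x * dvg N ψ x ≤ _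
  have h2 : ContDiff ℝ 1 (fun y => η y • ψ y) := hη.smul hψ
  have h3 : HasCompactSupport (fun y => η y • ψ y) := by
    refine HasCompactSupport.intro hψs.isCompact fun x hx => ?_
    simp only [image_eq_zero_of_notMem_tsupport hx, smul_zero]
  have h1 := hT _ ⟨fun y => η y • ψ y, h2, h3, fun x => by
      rw [norm_smul]
      exact mul_le_one₀ (h0 x) (norm_nonneg _) (hψ1 x), rfl⟩
  change ∫ x, u x * dvg N (fun y => η y • ψ y) x ≤ _ at h1
  have hηc : Continuous (fun x => fderiv ℝ η x (ψ x)) :=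
    (hη.continuous_fderiv (by simp)).clm_apply hψ.continuous
  have hb : ∀ x, ‖fderiv ℝ η x (ψ x)‖ ≤ L := fun x =>
    ((fderiv ℝ η x).le_opNorm _).trans ((mul_le_of_le_one_right (norm_nonneg _) (hψ1 x)).trans (hL x))
  have i1 : Integrable (fun x => u x * dvg N (fun y => η y • ψ y) x) := by
    obtain ⟨C, hC⟩ := (dvg_compact h3).exists_bound_of_continuous (dvg_continuous h2)
    exact hu.mul_bdd (dvg_continuous h2).aestronglyMeasurable (Eventually.of_forall hC)
  have i2 : Integrable (fun x => u x * fderiv ℝ η x (ψ x)) :=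
    hu.mul_bdd hηc.aestronglyMeasurable (Eventually.of_forall hb)
  have e : ∀ x, η x * u x * dvg N ψ x =
      u x * dvg N (fun y => η y • ψ y) x - u x * fderiv ℝ η x (ψ x) := by
    intro x
    rw [dvg_mul hψ hη]; ring
  simp only [e]
  rw [integral_sub i1 i2]
  have h5 : -(∫ x, u x * fderiv ℝ η x (ψ x)) ≤ L * ∫ x, |u x| := by
    rw [← integral_neg, ← integral_const_mul]
    refine integral_mono i2.neg (hu.abs.const_mul L) fun x => ?_
    have := hb x
    rw [Real.norm_eq_abs] at this
    calc - (u x * fderiv ℝ η x (ψ x)) ≤ |u x * fderiv ℝ η x (ψ x)| := neg_le_abs _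
      _ = |fderiv ℝ η x (ψ x)| * |u x| := by rw [abs_mul, mul_comm]
      _ ≤ L * |u x| := by gcongr
  linarith

lemma dvg_shift {N : ℕ} (ψ : Euc N → Euc N) (t x : Euc N) :
    dvg N (fun y => ψ (y + t)) x = dvg N ψ (x + t) := by
  unfold dvg
  refine Finset.sum_congr rfl fun i _ => ?_
  rw [fderiv_comp_add_right (f := fun y => ψ y i)]

lemma tv_mollify {N : ℕ} {v : Euc N → ℝ} (hv : Integrable v) {T : ℝ} (hT : ∀ r ∈ TVSet N v, r ≤ T)
    (φ : ContDiffBump (0 : Euc N)) :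
    ∀ r ∈ TVSet N (φ.normed volume ⋆[ContinuousLinearMap.lsmul ℝ ℝ, volume] v), r ≤ T := by
  rintro r ⟨ψ, hψ, hψs, hψ1, rfl⟩
  change ∫ x, _ * dvg N ψ x ≤ _
  set ρ := φ.normed volume with hρ
  have hρi : Integrable ρ := φ.integrable_normed
  obtain ⟨C, hC⟩ := (dvg_compact hψs).exists_bound_of_continuous (dvg_continuous hψ)
  have i0 : Integrable (fun p : Euc N × Euc N => ρ p.2 * v (p.1 - p.2)) (volume.prod volume) :=
    hρi.convolution_integrand (ContinuousLinearMap.lsmul ℝ ℝ) hv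
  have i1 : Integrable (fun p : Euc N × Euc N => ρ p.2 * v (p.1 - p.2) * dvg N ψ p.1)
      (volume.prod volume) :=
    i0.mul_bdd ((dvg_continuous hψ).comp continuous_fst).aestronglyMeasurable
      (Eventually.of_forall fun p => hC p.1)
  have e1 : ∫ x, (ρ ⋆[ContinuousLinearMap.lsmul ℝ ℝ, volume] v) x * dvg N ψ x =
      ∫ t, ∫ x, ρ t * v (x - t) * dvg N ψ x := by
    rw [← integral_integral_swap i1]
    refine integral_congr_ae (Eventually.of_forall fun x => ?_)
    simp only [convolution, ContinuousLinearMap.lsmul_apply, smul_eq_mul]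
    rw [integral_mul_const]
  rw [e1]
  have e2 : ∀ t, ∫ x, ρ t * v (x - t) * dvg N ψ x = ρ t * ∫ x, v x * dvg N (fun y => ψ (y + t)) x := by
    intro t
    rw [← integral_const_mul]
    rw [← integral_add_right_eq_self (fun x => ρ t * v (x - t) * dvg N ψ x) t]
    refine integral_congr_ae (Eventually.of_forall fun x => ?_)
    simp only [add_sub_cancel_right, dvg_shift]
    ring
  have i2 : Integrable (fun t => ∫ x, ρ t * v (x - t) * dvg N ψ x) := i1.integral_prod_right
  calc ∫ t, ∫ x, ρ t * v (x - t) * dvg N ψ x ≤ ∫ t, ρ t * T := by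
        refine integral_mono i2 (hρi.mul_const T) fun t => ?_
        simp only [e2 t]
        refine mul_le_mul_of_nonneg_left ?_ (φ.nonneg_normed t)
        refine hT _ ⟨fun y => ψ (y + t), hψ.comp (contDiff_id.add contDiff_const), ?_,
          fun x => hψ1 _, rfl⟩
        exact hψs.comp_homeomorph (Homeomorph.addRight t)
    _ = T := by rw [integral_mul_const, φ.integral_normed, one_mul]

/-- lower semicontinuity -/
lemma sob_lsc {N : ℕ} (hN : 2 ≤ N) {v : Euc N → ℝ} {w : ℕ → Euc N → ℝ}
    (hm : ∀ k, AEStronglyMeasurable (w k) volume)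
    (ht : ∀ᵐ x, Tendsto (fun k => w k x) atTop (𝓝 (v x))) {B : ℕ → ℝ} {T : ℝ}
    (hB : Tendsto B atTop (𝓝 T))
    (h : ∀ k, isoC N * (∫⁻ x, ‖w k x‖ₑ ^ ((N:ℝ)/((N:ℝ)-1))) ^ (((N:ℝ)-1)/N) ≤ ENNReal.ofReal (B k)) :
    isoC N * (∫⁻ x, ‖v x‖ₑ ^ ((N:ℝ)/((N:ℝ)-1))) ^ (((N:ℝ)-1)/N) ≤ ENNReal.ofReal T := by
  have hNr : (2:ℝ) ≤ N := by exact_mod_cast hN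
  have hp0 : 0 < (N:ℝ)/((N:ℝ)-1) := by apply div_pos <;> linarith
  have hpp : (((N:ℝ)-1)/N) * ((N:ℝ)/((N:ℝ)-1)) = 1 := by
    rw [div_mul_div_comm, mul_comm, div_self]; nlinarith
  have hq0 : 0 < ((N:ℝ)-1)/N := by apply div_pos <;> linarith
  set p := (N:ℝ)/((N:ℝ)-1) with hp
  set q := ((N:ℝ)-1)/N with hq
  have conv : ∀ (I : ℝ≥0∞) (T : ℝ≥0∞), isoC N * I ^ q ≤ T ↔ isoC N ^ p * I ≤ T ^ p := by
    intro I T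
    rw [← ENNReal.rpow_le_rpow_iff hp0, ENNReal.mul_rpow_of_nonneg _ _ hp0.le, ← ENNReal.rpow_mul, hpp,
      ENNReal.rpow_one]
  simp only [conv] at h ⊢
  have hfat : ∫⁻ x, ‖v x‖ₑ ^ p ≤ liminf (fun k => ∫⁻ x, ‖w k x‖ₑ ^ p) atTop := by
    calc ∫⁻ x, ‖v x‖ₑ ^ p = ∫⁻ x, liminf (fun k => ‖w k x‖ₑ ^ p) atTop := by
          refine lintegral_congr_ae (ht.mono fun x hx => ?_)
          have : Tendsto (fun k => ‖w k x‖ₑ ^ p) atTop (𝓝 (‖v x‖ₑ ^ p)) := hx.enorm.ennrpow_const p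
          exact this.liminf_eq.symm
      _ ≤ _ := lintegral_liminf_le' fun k => ((hm k).enorm.pow_const p)
  have hC : isoC N ^ p ≠ ∞ := ENNReal.rpow_ne_top_of_nonneg hp0.le (isoC_ne_top N)
  have t2 : Tendsto (fun k => ENNReal.ofReal (B k) ^ p) atTop (𝓝 (ENNReal.ofReal T ^ p)) :=
    ((ENNReal.continuous_ofReal.tendsto T).comp hB).ennrpow_const p
  calc isoC N ^ p * ∫⁻ x, ‖v x‖ₑ ^ p
      ≤ isoC N ^ p * liminf (fun k => ∫⁻ x, ‖w k x‖ₑ ^ p) atTop := by gcongr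
    _ = liminf (fun k => isoC N ^ p * ∫⁻ x, ‖w k x‖ₑ ^ p) atTop :=
        (ENNReal.liminf_const_mul_of_ne_top hC).symm
    _ ≤ liminf (fun k => ENNReal.ofReal (B k) ^ p) atTop :=
        liminf_le_liminf (Eventually.of_forall h)
    _ = ENNReal.ofReal T ^ p := t2.liminf_eq

lemma sob_compact {N : ℕ} (hN : 2 ≤ N) {v : Euc N → ℝ} (hv : Integrable v) (hc : HasCompactSupport v)
    {T : ℝ} (hT : ∀ r ∈ TVSet N v, r ≤ T) :
    isoC N * (∫⁻ x, ‖v x‖ₑ ^ ((N:ℝ)/((N:ℝ)-1))) ^ (((N:ℝ)-1)/N) ≤ ENNReal.ofReal T := by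
  let φ : ℕ → ContDiffBump (0 : Euc N) := fun k =>
    { rIn := 1 / ((k:ℝ)+1), rOut := 2 / ((k:ℝ)+1), rIn_pos := by positivity,
      rIn_lt_rOut := by gcongr; norm_num }
  have t0 : Tendsto (fun k => (φ k).rOut) atTop (𝓝 0) := by
    change Tendsto (fun k : ℕ => 2 / ((k:ℝ)+1)) atTop (𝓝 0)
    have := (tendsto_one_div_add_atTop_nhds_zero_nat (𝕜 := ℝ)).const_mul 2
    simpa [div_eq_mul_inv] using this
  have cd : ∀ k, ContDiff ℝ 2 ((φ k).normed volume ⋆[ContinuousLinearMap.lsmul ℝ ℝ, volume] v) :=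
    fun k => (φ k).hasCompactSupport_normed.contDiff_convolution_left _ (φ k).contDiff_normed
      hv.locallyIntegrable
  refine sob_lsc hN (w := fun k => (φ k).normed volume ⋆[ContinuousLinearMap.lsmul ℝ ℝ, volume] v)
    (B := fun _ => T) (fun k => (cd k).continuous.aestronglyMeasurable) ?_ tendsto_const_nhds ?_
  · refine ContDiffBump.ae_convolution_tendsto_right_of_locallyIntegrable (K := 2) t0 ?_
      hv.locallyIntegrable
    refine Eventually.of_forall fun k => le_of_eq ?_
    change 2 / ((k:ℝ)+1) = 2 * (1 / ((k:ℝ)+1))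
    ring
  · intro k
    exact sob_smooth_tv N hN _ (cd k) (HasCompactSupport.convolution _ (φ k).hasCompactSupport_normed hc)
      (tv_mollify hv hT (φ k))

theorem sobolev {N : ℕ} (hN : 2 ≤ N) {u : Euc N → ℝ} (hu : Integrable u)
    {T : ℝ} (hT : ∀ r ∈ TVSet N u, r ≤ T) :
    isoC N * (∫⁻ x, ‖u x‖ₑ ^ ((N:ℝ)/((N:ℝ)-1))) ^ (((N:ℝ)-1)/N) ≤ ENNReal.ofReal T := by
  let χ : ContDiffBump (0 : Euc N) := { rIn := 1, rOut := 2, rIn_pos := by norm_num,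
                                        rIn_lt_rOut := by norm_num }
  have hχ : ContDiff ℝ 1 χ := χ.contDiff
  obtain ⟨C, hC⟩ := (χ.hasCompactSupport.fderiv ℝ).exists_bound_of_continuous
    (hχ.continuous_fderiv (by simp))
  set η : ℕ → Euc N → ℝ := fun k x => χ (((k:ℝ)+1)⁻¹ • x) with hη
  have hηc : ∀ k, ContDiff ℝ 1 (η k) := fun k => hχ.comp (contDiff_const_smul _)
  have hη1 : ∀ k x, |η k x| ≤ 1 := fun k x => by
    rw [abs_of_nonneg χ.nonneg]; exact χ.le_one
  have hηd : ∀ k x, ‖fderiv ℝ (η k) x‖ ≤ ((k:ℝ)+1)⁻¹ * C := by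
    intro k x
    rw [hη]
    simp only
    rw [fderiv_comp_smul, norm_smul, Real.norm_eq_abs, abs_of_pos (by positivity)]
    gcongr
    exact hC _
  have hηs : ∀ k, HasCompactSupport (η k) := fun k =>
    χ.hasCompactSupport.comp_smul (by positivity)
  have hintg : ∀ k, Integrable (fun x => η k x * u x) := fun k =>
    hu.bdd_mul (hηc k).continuous.aestronglyMeasurable (Eventually.of_forall (hη1 k))
  refine sob_lsc hN (w := fun k x => η k x * u x)
    (B := fun k => T + (((k:ℝ)+1)⁻¹ * C) * ∫ x, |u x|) (fun k => (hintg k).1) ?_ ?_ ?_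
  · refine Eventually.of_forall fun x => ?_
    refine tendsto_const_nhds.congr' ?_
    obtain ⟨k₀, hk₀⟩ := exists_nat_gt ‖x‖
    filter_upwards [eventually_ge_atTop k₀] with k hk
    have : η k x = 1 := by
      apply χ.one_of_mem_closedBall
      simp only [mem_closedBall_zero_iff, norm_smul, Real.norm_eq_abs]
      rw [abs_of_pos (by positivity), inv_mul_le_iff₀ (by positivity)]
      have : (k₀:ℝ) ≤ k := by exact_mod_cast hk
      change ‖x‖ ≤ ((k:ℝ)+1) * 1
      linarith
    rw [this, one_mul]
  · have h1 : Tendsto (fun k : ℕ => ((k:ℝ)+1)⁻¹) atTop (𝓝 0) := by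
      simpa using tendsto_one_div_add_atTop_nhds_zero_nat (𝕜 := ℝ)
    simpa using (tendsto_const_nhds (x := T)).add ((h1.mul_const C).mul_const (∫ x, |u x|))
  · intro k
    exact sob_compact hN (hintg k) ((hηs k).mul_right) (tv_cutoff hu hT (hηc k) (hη1 k) (hηd k))

end PartFive

section PartSix
open scoped ENNReal NNReal Pointwise

lemma ibp_lip {N : ℕ} {ψ : Euc N → Euc N} (h : ContDiff ℝ 1 ψ) (hc : HasCompactSupport ψ)
    {f : Euc N → ℝ} {C : ℝ≥0} (hf : LipschitzWith C f) :
    ∫ x, f x * dvg N ψ x = - ∫ x, fderiv ℝ f x (ψ x) := by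
  have hpc := fun i => (coord_contDiff h i).continuous
  have hpcs := fun i => coord_compact hc i
  have hpd : ∀ i v, Continuous fun x => fderiv ℝ (fun y => ψ y i) x v := fun i v =>
    ((coord_contDiff h i).continuous_fderiv (by simp)).clm_apply continuous_const
  have hpds : ∀ i v, HasCompactSupport fun x => fderiv ℝ (fun y => ψ y i) x v := fun i v =>
    (hpcs i).fderiv_apply ℝ v
  have hlip : ∀ i, ∃ D, LipschitzWith D (fun y => ψ y i) := fun i =>
    (coord_contDiff h i).lipschitzWith_of_hasCompactSupport (hpcs i) (by simp)
  have hae : ∀ᵐ x, DifferentiableAt ℝ f x := hf.ae_differentiableAt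
  have e1 : ∫ x, fderiv ℝ f x (ψ x) =
      ∫ x, ∑ i, lineDeriv ℝ f x (EuclideanSpace.single i 1) * ψ x i := by
    refine integral_congr_ae (hae.mono fun x hx => ?_)
    simp only [clm_expand (fderiv ℝ f x) (ψ x), hx.lineDeriv_eq_fderiv]
  rw [e1]
  simp only [dvg, Finset.mul_sum]
  rw [integral_finsetSum, integral_finsetSum, ← Finset.sum_neg_distrib]
  · refine Finset.sum_congr rfl fun i _ => ?_
    obtain ⟨D, hD⟩ := hlip i
    rw [hf.integral_lineDeriv_mul_eq hD (hpcs i), ← integral_neg]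
    refine integral_congr_ae (Eventually.of_forall fun x => ?_)
    have := ((coord_contDiff h i).differentiable (by simp) x).lineDeriv_eq_fderiv
      (v := -EuclideanSpace.single i (1:ℝ))
    simp only [this, map_neg]
    ring
  · intro i _
    have hintg : Integrable (fun x => ψ x i) := (hpc i).integrable_of_hasCompactSupport (hpcs i)
    refine hintg.bdd_mul (c := C * ‖EuclideanSpace.single i (1:ℝ)‖) ?_ ?_
    · exact (measurable_lineDeriv hf.continuous).aestronglyMeasurable
    · exact Eventually.of_forall fun x => norm_lineDeriv_le_of_lipschitz ℝ hf
  · intro i _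
    exact (hf.continuous.mul (hpd i _)).integrable_of_hasCompactSupport ((hpds i _).mul_left)

lemma ball_aux {N : ℕ} (hN : 2 ≤ N) {ψ : Euc N → Euc N} (h : ContDiff ℝ 1 ψ) (hc : HasCompactSupport ψ)
    (h1 : ∀ x, ‖ψ x‖ ≤ 1) {C : ℝ} (hC : ∀ x, ‖dvg N ψ x‖ ≤ C) {R δ : ℝ} (hR : 0 < R) (hδ : 0 < δ) :
    ∫ x in Metric.ball (0 : Euc N) R, dvg N ψ x ≤
      (δ⁻¹ + C) * (((R + δ)^N - R^N) * (volume (Metric.ball (0 : Euc N) 1)).toReal) := by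
  set β := (volume (Metric.ball (0 : Euc N) 1)).toReal with hβ
  set A : Set (Euc N) := Metric.closedBall 0 (R+δ) \ Metric.ball 0 R with hA
  have hAm : MeasurableSet A := measurableSet_closedBall.diff measurableSet_ball
  have hsub : Metric.ball (0 : Euc N) R ⊆ Metric.closedBall 0 (R+δ) :=
    (Metric.ball_subset_closedBall).trans (Metric.closedBall_subset_closedBall (by linarith))
  have hvA : volume.real A = ((R + δ)^N - R^N) * β := by
    rw [hA, measureReal_sdiff hsub measurableSet_ball (h₁ := measure_closedBall_lt_top.ne), Measure.real, Measure.real,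
      Measure.addHaar_closedBall _ _ (by linarith), Measure.addHaar_ball_of_pos _ _ hR,
      finrank_euclideanSpace_fin, ENNReal.toReal_mul, ENNReal.toReal_mul,
      ENNReal.toReal_ofReal (by positivity), ENNReal.toReal_ofReal (by positivity)]
    ring
  have hAf : volume A ≠ ∞ :=
    ne_top_of_le_ne_top measure_closedBall_lt_top.ne (measure_mono Set.sdiff_subset)
  obtain ⟨f, hf⟩ : ∃ f : Euc N → ℝ, f = fun x => max 0 (min 1 (δ⁻¹ * (R + δ - ‖x‖))) := ⟨_, rfl⟩
  have hlip : LipschitzWith (Real.toNNReal δ⁻¹) f := by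
    rw [hf]
    refine LipschitzWith.const_max (LipschitzWith.const_min ?_ 1) 0
    refine LipschitzWith.of_dist_le_mul fun x y => ?_
    rw [Real.coe_toNNReal _ (by positivity), Real.dist_eq, dist_eq_norm, ← mul_sub, abs_mul,
      abs_of_pos (by positivity)]
    gcongr
    have := abs_norm_sub_norm_le y x
    rw [norm_sub_rev] at this
    have e : R + δ - ‖x‖ - (R + δ - ‖y‖) = ‖y‖ - ‖x‖ := by ring
    rw [e]
    exact this
  have hf01 : ∀ x, |f x| ≤ 1 := by
    intro x
    rw [hf, abs_of_nonneg (le_max_left _ _)]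
    exact max_le zero_le_one (min_le_left _ _)
  have hf1 : ∀ x ∈ Metric.ball (0 : Euc N) R, f x = 1 := by
    intro x hx
    rw [hf]
    have hx' : ‖x‖ < R := by simpa using hx
    have : 1 ≤ δ⁻¹ * (R + δ - ‖x‖) := by
      rw [le_inv_mul_iff₀ hδ]; linarith
    simp [min_eq_left this]
  have hf0 : ∀ x ∈ (Metric.closedBall (0 : Euc N) (R+δ))ᶜ, f x = 0 := by
    intro x hx
    rw [hf]
    have hx' : R + δ < ‖x‖ := by simpa using hx
    have : δ⁻¹ * (R + δ - ‖x‖) ≤ 0 :=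
      mul_nonpos_of_nonneg_of_nonpos (by positivity) (by linarith)
    exact max_eq_left ((min_le_right _ _).trans this)
  have hd : ∀ x, -(fderiv ℝ f x (ψ x)) ≤ A.indicator (fun _ => δ⁻¹) x := by
    intro x
    by_cases hxA : x ∈ A
    · rw [Set.indicator_of_mem hxA]
      have h2 := norm_fderiv_le_of_lipschitz ℝ hlip (x₀ := x)
      rw [Real.coe_toNNReal _ (by positivity)] at h2
      calc -(fderiv ℝ f x (ψ x)) ≤ ‖fderiv ℝ f x (ψ x)‖ := neg_le_abs _
        _ ≤ ‖fderiv ℝ f x‖ * ‖ψ x‖ := (fderiv ℝ f x).le_opNorm _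
        _ ≤ ‖fderiv ℝ f x‖ := mul_le_of_le_one_right (norm_nonneg _) (h1 x)
        _ ≤ δ⁻¹ := h2
    · rw [Set.indicator_of_notMem hxA]
      have hz : fderiv ℝ f x = 0 := by
        by_cases hxb : x ∈ Metric.ball (0 : Euc N) R
        · have : f =ᶠ[𝓝 x] fun _ => 1 := by
            filter_upwards [Metric.isOpen_ball.mem_nhds hxb] with y hy using hf1 y hy
          rw [this.fderiv_eq]; simp
        · have hx' : x ∈ (Metric.closedBall (0 : Euc N) (R+δ))ᶜ := fun hh => hxA ⟨hh, hxb⟩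
          have : f =ᶠ[𝓝 x] fun _ => 0 := by
            filter_upwards [Metric.isClosed_closedBall.isOpen_compl.mem_nhds hx'] with y hy using hf0 y hy
          rw [this.fderiv_eq]; simp
      simp [hz]
  have hDi : Integrable (dvg N ψ) :=
    (dvg_continuous h).integrable_of_hasCompactSupport (dvg_compact hc)
  have iA : ∀ c : ℝ, Integrable (A.indicator (fun _ => c)) := fun c =>
    (integrable_indicator_iff hAm).2 (integrableOn_const hAf)
  have intA : ∀ c : ℝ, ∫ x, A.indicator (fun _ => c) x = c * volume.real A := fun c => by
    rw [integral_indicator hAm, setIntegral_const, smul_eq_mul, mul_comm]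
  have hfd : Integrable (fun x => f x * dvg N ψ x) :=
    hDi.bdd_mul hlip.continuous.aestronglyMeasurable (Eventually.of_forall hf01)
  have b1 : ∫ x, f x * dvg N ψ x ≤ δ⁻¹ * volume.real A := by
    rw [ibp_lip h hc hlip, ← integral_neg, ← intA]
    by_cases hi : Integrable (fun x => -(fderiv ℝ f x (ψ x)))
    · exact integral_mono hi (iA _) hd
    · rw [integral_undef hi]
      refine integral_nonneg fun x => ?_
      exact Set.indicator_nonneg (fun _ _ => by positivity) x
  have b2 : ∫ x in Metric.ball (0 : Euc N) R, dvg N ψ x ≤ ∫ x, (f x * dvg N ψ x + A.indicator (fun _ => C) x) := by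
    rw [← integral_indicator measurableSet_ball]
    refine integral_mono (hDi.indicator measurableSet_ball) (hfd.add (iA C)) fun x => ?_
    have hC0 : 0 ≤ C := (norm_nonneg _).trans (hC x)
    by_cases hxb : x ∈ Metric.ball (0 : Euc N) R
    · have : x ∉ A := fun hh => hh.2 hxb
      simp [Set.indicator_of_mem hxb, Set.indicator_of_notMem this, hf1 x hxb]
    · rw [Set.indicator_of_notMem hxb]
      by_cases hxA : x ∈ A
      · rw [Set.indicator_of_mem hxA]
        have : |f x * dvg N ψ x| ≤ C := by
          rw [abs_mul]
          exact (mul_le_of_le_one_left (abs_nonneg _) (hf01 x)).trans (hC x)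
        have := neg_abs_le (f x * dvg N ψ x)
        linarith
      · have hx' : x ∈ (Metric.closedBall (0 : Euc N) (R+δ))ᶜ := fun hh => hxA ⟨hh, hxb⟩
        simp [Set.indicator_of_notMem hxA, hf0 x hx']
  rw [integral_add hfd (iA C), intA] at b2
  rw [hvA] at b1 b2
  linarith

lemma ball_tv {N : ℕ} (hN : 2 ≤ N) {ψ : Euc N → Euc N} (h : ContDiff ℝ 1 ψ) (hc : HasCompactSupport ψ)
    (h1 : ∀ x, ‖ψ x‖ ≤ 1) {R : ℝ} (hR : 0 < R) :
    ∫ x in Metric.ball (0 : Euc N) R, dvg N ψ x ≤ omegaS N * R ^ (N-1) := by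
  obtain ⟨C, hC⟩ := (dvg_compact hc).exists_bound_of_continuous (dvg_continuous h)
  set β := (volume (Metric.ball (0 : Euc N) 1)).toReal with hβ
  have hd : HasDerivAt (fun x : ℝ => x ^ N) (N * R ^ (N-1)) R := hasDerivAt_pow N R
  have t1 : Tendsto (fun δ : ℝ => δ⁻¹ * ((R + δ)^N - R^N)) (𝓝[>] 0) (𝓝 (N * R^(N-1))) := by
    have := hd.tendsto_slope_zero_right
    simpa using this
  have t2 : Tendsto (fun δ : ℝ => ((R + δ)^N - R^N)) (𝓝[>] 0) (𝓝 0) := by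
    have : Tendsto (fun δ : ℝ => ((R + δ)^N - R^N)) (𝓝 0) (𝓝 ((R + 0)^N - R^N)) :=
      Continuous.tendsto (by fun_prop) 0
    simpa using this.mono_left nhdsWithin_le_nhds
  have t3 : Tendsto (fun δ : ℝ => (δ⁻¹ + C) * (((R + δ)^N - R^N) * β)) (𝓝[>] 0)
      (𝓝 (omegaS N * R ^ (N-1))) := by
    have := (t1.add (t2.const_mul C)).mul_const β
    convert this using 2
    · ring
    · rw [omegaS]; ring
  exact ge_of_tendsto t3 (eventually_mem_nhdsWithin.mono fun δ hδ => ball_aux hN h hc h1 hC hR hδ)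

lemma ball_TVSet {N : ℕ} (hN : 2 ≤ N) {R c : ℝ} (hR : 0 < R) (hc : 0 < c) :
    ∀ r ∈ TVSet N ((Metric.ball (0 : Euc N) R).indicator fun _ => c), r ≤ c * (omegaS N * R ^ (N-1)) := by
  rintro r ⟨ψ, hψ, hψs, hψ1, rfl⟩
  change ∫ x, _ * dvg N ψ x ≤ _
  have : ∀ x, (Metric.ball (0 : Euc N) R).indicator (fun _ => c) x * dvg N ψ x =
      (Metric.ball (0 : Euc N) R).indicator (fun x => c * dvg N ψ x) x := by
    intro x
    by_cases hx : x ∈ Metric.ball (0 : Euc N) R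
    · rw [Set.indicator_of_mem hx, Set.indicator_of_mem hx]
    · rw [Set.indicator_of_notMem hx, Set.indicator_of_notMem hx, zero_mul]
  simp only [this]
  rw [integral_indicator measurableSet_ball, integral_const_mul]
  gcongr
  exact ball_tv hN hψ hψs hψ1 hR

end PartSix

section PartSeven
open scoped ENNReal NNReal

lemma zero_mem_TVSet {N : ℕ} (u : Euc N → ℝ) : (0:ℝ) ∈ TVSet N u := by
  refine ⟨fun _ => 0, contDiff_const, HasCompactSupport.zero, by simp, ?_⟩
  simp

lemma le_tv {N : ℕ} {u : Euc N → ℝ} (hu : MemBV N u) : ∀ r ∈ TVSet N u, r ≤ tv N u :=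
  fun _ hr => le_csSup hu.2 hr

lemma tv_nonneg {N : ℕ} {u : Euc N → ℝ} (hu : MemBV N u) : 0 ≤ tv N u :=
  le_tv hu 0 (zero_mem_TVSet u)

lemma nrm1_eq {N : ℕ} (u : Euc N → ℝ) : nrm1 N u = (∫⁻ x, ‖u x‖ₑ).toReal := by
  rw [nrm1, eLpNorm_one_eq_lintegral_enorm]

lemma nrmq_pow {N : ℕ} {q : ℝ} (hq : 0 < q) (u : Euc N → ℝ) :
    nrmq N q u ^ q = (∫⁻ x, ‖u x‖ₑ ^ q).toReal := by
  rw [nrmq, eLpNorm_eq_lintegral_rpow_enorm_toReal (by simpa using hq) (by simp),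
    ENNReal.toReal_ofReal hq.le, ENNReal.toReal_rpow, ← ENNReal.rpow_mul,
    one_div_mul_cancel hq.ne', ENNReal.rpow_one]

lemma vol_pos (N : ℕ) : 0 < (volume (Metric.ball (0 : Euc N) 1)).toReal :=
  ENNReal.toReal_pos (Metric.measure_ball_pos _ _ one_pos).ne' measure_ball_lt_top.ne

lemma isoC_pow {N : ℕ} (hN : 2 ≤ N) (q : ℝ) :
    (isoC N).toReal ^ ((q-1) * (N:ℝ)) = ((N : ℝ) ^ (N - 1) * omegaS N) ^ (q-1) := by
  have hN0 : (N:ℝ) ≠ 0 := by positivity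
  have hβ := vol_pos N
  rw [isoC, ENNReal.toReal_mul, ← ENNReal.toReal_rpow, ENNReal.toReal_natCast, omegaS,
    mul_comm (q-1), Real.rpow_mul (by positivity), Real.mul_rpow (by positivity) (by positivity),
    ← Real.rpow_mul hβ.le, one_div_mul_cancel hN0, Real.rpow_one, Real.rpow_natCast]
  congr 1
  rw [← mul_assoc, ← pow_succ, Nat.sub_add_cancel (by omega)]

lemma gn {N : ℕ} (hN : 2 ≤ N) {q : ℝ} (hq1 : 1 < q)
    (hq2 : q ≤ (N : ℝ) / ((N : ℝ) - 1)) {u : Euc N → ℝ} (hu : MemBV N u) :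
    (∫⁻ x, ‖u x‖ₑ ^ q) ≠ ∞ ∧ ((N : ℝ) ^ (N - 1) * omegaS N) ^ (q-1) * nrmq N q u ^ q ≤
      nrm1 N u ^ (q - (q-1)*N) * tv N u ^ ((q-1)*(N:ℝ)) := by
  have hN2 : (2:ℝ) ≤ N := by exact_mod_cast hN
  have hN1 : (0:ℝ) < (N:ℝ) - 1 := by linarith
  have hq0 : 0 < q := by linarith
  set θ := (q-1) * ((N:ℝ)-1) with hθ
  have hθ0 : 0 ≤ θ := mul_nonneg (by linarith) hN1.le
  have hθ1 : 0 ≤ 1 - θ := by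
    rw [le_div_iff₀ hN1] at hq2
    rw [hθ]; linarith
  have hs : 0 ≤ (q-1)*(N:ℝ) := mul_nonneg (by linarith) (by linarith)
  have hX : ∫⁻ x, ‖u x‖ₑ ≠ ∞ := hu.1.2.ne
  have hm : AEMeasurable (fun x => ‖u x‖ₑ) := hu.1.1.enorm
  have h1 : ∫⁻ x, ‖u x‖ₑ ^ q ≤ (∫⁻ x, ‖u x‖ₑ) ^ (1-θ) *
      (∫⁻ x, ‖u x‖ₑ ^ ((N:ℝ)/((N:ℝ)-1))) ^ θ := by
    have := ENNReal.lintegral_mul_norm_pow_le (μ := volume) hm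
      (hm.pow_const ((N:ℝ)/((N:ℝ)-1))) hθ1 hθ0 (by ring)
    refine le_trans (le_of_eq ?_) this
    refine lintegral_congr fun x => ?_
    rw [← ENNReal.rpow_mul, ← ENNReal.rpow_add_of_nonneg _ _ hθ1 (by positivity)]
    congr 1
    rw [hθ]; field_simp; ring
  have h2 := sobolev hN hu.1 (le_tv hu)
  have h3 : isoC N ^ ((q-1)*(N:ℝ)) * (∫⁻ x, ‖u x‖ₑ ^ ((N:ℝ)/((N:ℝ)-1))) ^ θ ≤
      ENNReal.ofReal (tv N u) ^ ((q-1)*(N:ℝ)) := by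
    have := ENNReal.rpow_le_rpow h2 hs
    rw [ENNReal.mul_rpow_of_nonneg _ _ hs, ← ENNReal.rpow_mul] at this
    refine le_trans (le_of_eq ?_) this
    congr 2
    rw [hθ]; field_simp
  have h4 : isoC N ^ ((q-1)*(N:ℝ)) * ∫⁻ x, ‖u x‖ₑ ^ q ≤
      (∫⁻ x, ‖u x‖ₑ) ^ (1-θ) * ENNReal.ofReal (tv N u) ^ ((q-1)*(N:ℝ)) := by
    calc _ ≤ isoC N ^ ((q-1)*(N:ℝ)) * ((∫⁻ x, ‖u x‖ₑ) ^ (1-θ) *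
      (∫⁻ x, ‖u x‖ₑ ^ ((N:ℝ)/((N:ℝ)-1))) ^ θ) := by gcongr
      _ = (∫⁻ x, ‖u x‖ₑ) ^ (1-θ) * (isoC N ^ ((q-1)*(N:ℝ)) *
        (∫⁻ x, ‖u x‖ₑ ^ ((N:ℝ)/((N:ℝ)-1))) ^ θ) := by ring
      _ ≤ _ := by gcongr
  have hR : (∫⁻ x, ‖u x‖ₑ) ^ (1-θ) * ENNReal.ofReal (tv N u) ^ ((q-1)*(N:ℝ)) ≠ ∞ :=
    ENNReal.mul_ne_top (ENNReal.rpow_ne_top_of_nonneg hθ1 hX)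
      (ENNReal.rpow_ne_top_of_nonneg hs ENNReal.ofReal_ne_top)
  have hω : 0 < (N : ℝ) ^ (N - 1) * omegaS N := by
    have := vol_pos N
    rw [omegaS]; positivity
  have hK : 0 < (isoC N).toReal ^ ((q-1) * (N:ℝ)) := by
    rw [isoC_pow hN]; positivity
  have hI0 : isoC N ^ ((q-1)*(N:ℝ)) ≠ 0 := by
    intro h
    rw [ENNReal.toReal_rpow, h] at hK
    simp at hK
  constructor
  · intro h
    rw [h, ENNReal.mul_top hI0] at h4
    exact hR (top_le_iff.1 h4)
  · have h5 := ENNReal.toReal_mono hR h4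
    rw [ENNReal.toReal_mul, ENNReal.toReal_mul, ← ENNReal.toReal_rpow, ← ENNReal.toReal_rpow,
      ← ENNReal.toReal_rpow, ENNReal.toReal_ofReal (tv_nonneg hu), isoC_pow hN] at h5
    rw [nrmq_pow hq0, nrm1_eq]
    refine h5.trans (le_of_eq ?_)
    congr 2
    rw [hθ]; ring

lemma g_eq {N : ℕ} {q a b X Y : ℝ} (ha : 0 < a) (hb : 0 < b) (hX : 0 < X) (hY : 0 < Y)
    (h : Y ^ a + X ^ b = 1) :
    ((1+Y^a/X^b) ^ (1/b) - 1) * (1+Y^a/X^b) ^ ((q-1)*((N:ℝ)/a - ((N:ℝ)-1)/b)) /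
              (Y^a/X^b) ^ ((q-1)*(N:ℝ)/a) =
    (1 - X) / (X ^ (q - (q-1)*N) * Y ^ ((q-1)*(N:ℝ))) := by
  have hXb : 0 < X ^ b := by positivity
  have hYa : 0 < Y ^ a := by positivity
  have e1 : 1+Y^a/X^b = X ^ (-b) := by
    rw [Real.rpow_neg hX.le]; field_simp; linarith
  rw [e1, ← Real.rpow_mul hX.le, ← Real.rpow_mul hX.le, Real.div_rpow hYa.le hXb.le,
    ← Real.rpow_mul hY.le, ← Real.rpow_mul hX.le]
  have e2 : a * ((q-1)*(N:ℝ)/a) = (q-1)*N := by field_simp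
  have e3 : -b * (1/b) = -1 := by field_simp
  have e4 : -b * ((q-1)*((N:ℝ)/a - ((N:ℝ)-1)/b)) = -(b * ((q-1)*(N:ℝ)/a)) + (1 - (q - (q-1)*N)) := by
    field_simp; ring
  rw [e2, e3, e4, Real.rpow_neg_one, Real.rpow_add hX, Real.rpow_neg hX.le, Real.rpow_sub hX,
    Real.rpow_one]
  field_simp

lemma bv_pos {N : ℕ} (hN : 2 ≤ N) {q a b : ℝ} (hq1 : 1 < q)
    (hq2 : q ≤ (N : ℝ) / ((N : ℝ) - 1)) (ha : 0 < a) (hb : 0 < b) {u : Euc N → ℝ}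
    (hu : MemBV N u) (h : tv N u ^ a + nrm1 N u ^ b = 1) :
    0 < nrm1 N u ∧ 0 < tv N u ∧ 0 < nrmq N q u ^ q := by
  have hN0 : (0:ℝ) < N := by positivity
  have hω : 0 < (N : ℝ) ^ (N - 1) * omegaS N := by
    have := vol_pos N
    rw [omegaS]; positivity
  have hm : AEMeasurable (fun x => ‖u x‖ₑ) := hu.1.1.enorm
  have hune : ¬ u =ᵐ[volume] 0 := by
    intro h0
    have hx : nrm1 N u = 0 := by
      rw [nrm1, eLpNorm_congr_ae h0]; simp
    have ht : tv N u = 0 := by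
      refine le_antisymm (csSup_le ⟨0, zero_mem_TVSet u⟩ ?_) (tv_nonneg hu)
      rintro r ⟨ψ, -, -, -, rfl⟩
      refine le_of_eq ?_
      rw [← integral_zero (Euc N) ℝ (μ := volume)]
      refine integral_congr_ae (h0.mono fun x hx => ?_)
      simp only [hx, Pi.zero_apply, zero_mul]
    rw [hx, ht, Real.zero_rpow ha.ne', Real.zero_rpow hb.ne'] at h
    norm_num at h
  have hX : 0 < nrm1 N u := by
    rw [nrm1_eq]
    refine ENNReal.toReal_pos (fun h0 => hune ?_) hu.1.2.ne
    rw [lintegral_eq_zero_iff' hm] at h0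
    exact h0.mono fun x hx => by simpa using hx
  obtain ⟨g1, g2⟩ := gn hN hq1 hq2 hu
  have hq : 0 < nrmq N q u ^ q := by
    rw [nrmq_pow (by linarith)]
    refine ENNReal.toReal_pos (fun h0 => hune ?_) g1
    rw [lintegral_eq_zero_iff' (hm.pow_const q)] at h0
    refine h0.mono fun x hx => ?_
    have : ‖u x‖ₑ ^ q = 0 := hx
    rw [ENNReal.rpow_eq_zero_iff_of_pos (by linarith)] at this
    simpa using this
  refine ⟨hX, lt_of_le_of_ne (tv_nonneg hu) fun h0 => ?_, hq⟩
  rw [← h0, Real.zero_rpow (mul_pos (by linarith) hN0).ne', mul_zero] at g2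
  have : 0 < ((N : ℝ) ^ (N - 1) * omegaS N) ^ (q-1) * nrmq N q u ^ q := by positivity
  linarith

lemma attain {N : ℕ} (hN : 2 ≤ N) {q : ℝ} (hq1 : 1 < q)
    (hq2 : q ≤ (N : ℝ) / ((N : ℝ) - 1)) {X Y : ℝ} (hX : 0 < X) (hY : 0 < Y) :
    ∃ u : Euc N → ℝ, MemBV N u ∧ tv N u = Y ∧ nrm1 N u = X ∧
      ((N : ℝ) ^ (N - 1) * omegaS N) ^ (q-1) * nrmq N q u ^ q =
      X ^ (q - (q-1)*N) * Y ^ ((q-1)*(N:ℝ)) := by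
  have hN0 : (0:ℝ) < N := by positivity
  have hq0 : 0 < q := by linarith
  have hβ := vol_pos N
  set β := (volume (Metric.ball (0 : Euc N) 1)).toReal with hβd
  obtain ⟨R, hR⟩ : ∃ R : ℝ, R = N * X / Y := ⟨_, rfl⟩
  have hR0 : 0 < R := by rw [hR]; positivity
  obtain ⟨c, hc⟩ : ∃ c : ℝ, c = X / (β * R ^ N) := ⟨_, rfl⟩
  have hc0 : 0 < c := by rw [hc]; positivity
  have hcX : c * (β * R ^ N) = X := by rw [hc]; field_simp
  have hvol : (volume (Metric.ball (0 : Euc N) R)).toReal = β * R ^ N := by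
    rw [Measure.addHaar_ball_of_pos _ _ hR0, finrank_euclideanSpace_fin, ENNReal.toReal_mul,
      ENNReal.toReal_ofReal (by positivity), mul_comm]
  obtain ⟨u, hu⟩ : ∃ u : Euc N → ℝ, u = (Metric.ball (0 : Euc N) R).indicator fun _ => c := ⟨_, rfl⟩
  have hpow : ∀ s : ℝ, 0 < s → (∫⁻ x, ‖u x‖ₑ ^ s).toReal = c ^ s * (β * R ^ N) := by
    intro s hs
    have : ∀ x, ‖u x‖ₑ ^ s = (Metric.ball (0 : Euc N) R).indicator
        (fun _ => ENNReal.ofReal c ^ s) x := by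
      intro x
      by_cases hx : x ∈ Metric.ball (0 : Euc N) R
      · rw [hu, Set.indicator_of_mem hx, Set.indicator_of_mem hx, Real.enorm_of_nonneg hc0.le]
      · rw [hu, Set.indicator_of_notMem hx, Set.indicator_of_notMem hx, enorm_zero,
          ENNReal.zero_rpow_of_pos hs]
    simp only [this]
    rw [lintegral_indicator measurableSet_ball, setLIntegral_const, ENNReal.toReal_mul, hvol,
      ← ENNReal.toReal_rpow, ENNReal.toReal_ofReal hc0.le]
  have hub := ball_TVSet hN hR0 hc0
  have hYe : c * (omegaS N * R ^ (N-1)) = Y := by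
    have : R ^ N = R ^ (N-1) * R := by rw [← pow_succ, Nat.sub_add_cancel (by omega)]
    rw [this] at hcX
    have h2 : c * (omegaS N * R ^ (N-1)) * R = N * X := by
      rw [omegaS, ← hβd, ← hcX]; ring
    have h3 : Y * R = N * X := by rw [hR]; field_simp
    exact mul_right_cancel₀ hR0.ne' (h2.trans h3.symm)
  rw [hYe, ← hu] at hub
  have hBV : MemBV N u := by
    refine ⟨?_, Y, hub⟩
    rw [hu]
    exact (integrable_indicator_iff measurableSet_ball).2
      (integrableOn_const measure_ball_lt_top.ne)
  have hnX : nrm1 N u = X := by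
    have := hpow 1 one_pos
    simp only [ENNReal.rpow_one, Real.rpow_one] at this
    rw [nrm1_eq, this, hcX]
  have hnq : ((N : ℝ) ^ (N - 1) * omegaS N) ^ (q-1) * nrmq N q u ^ q =
      X ^ (q - (q-1)*N) * Y ^ ((q-1)*(N:ℝ)) := by
    have e1 : (N : ℝ) ^ (N - 1) * omegaS N = N ^ N * β := by
      rw [omegaS, ← mul_assoc, ← pow_succ, Nat.sub_add_cancel (by omega)]
    have e2 : c ^ q = c ^ (q-1) * c := by
      rw [Real.rpow_sub_one hc0.ne']; field_simp
    have e3 : (N:ℝ) ^ N * β * c = Y ^ N / X ^ N * X := by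
      rw [hc, hR, div_pow, mul_pow]; field_simp
    have e4 : X ^ (q - (q-1)*N) = X ^ (q-1) * X / (X ^ N) ^ (q-1) := by
      rw [← Real.rpow_natCast X N, ← Real.rpow_mul hX.le, mul_comm (N:ℝ), Real.rpow_sub hX,
        Real.rpow_sub_one hX.ne']
      field_simp
    have e5 : Y ^ ((q-1)*(N:ℝ)) = (Y ^ N) ^ (q-1) := by
      rw [← Real.rpow_natCast Y N, ← Real.rpow_mul hY.le, mul_comm (N:ℝ)]
    rw [nrmq_pow hq0, hpow q hq0, e1, e2, mul_assoc (c ^ (q-1)), hcX, ← mul_assoc,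
      ← Real.mul_rpow (by positivity) hc0.le, e3, Real.mul_rpow (by positivity) hX.le,
      Real.div_rpow (by positivity) (by positivity), e4, e5]
    ring
  refine ⟨u, hBV, le_antisymm (csSup_le ⟨0, zero_mem_TVSet u⟩ hub) ?_, hnX, hnq⟩
  have h := (gn hN hq1 hq2 hBV).2
  rw [hnq, hnX] at h
  have h' := le_of_mul_le_mul_left h (by positivity)
  exact (Real.rpow_le_rpow_iff hY.le (tv_nonneg hBV) (mul_pos (by linarith) hN0)).1 h'

end PartSeven

/-- `α_v = (1/E_q) inf_{t>0} g(t)`. -/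
theorem alphav_eq_inf_g (N : ℕ) (hN : 2 ≤ N) (q : ℝ) (hq1 : 1 < q)
    (hq2 : q ≤ (N : ℝ) / ((N : ℝ) - 1)) (a b : ℝ) (ha : 0 < a) (hb : 0 < b) :
    sInf { r | ∃ u : Euc N → ℝ, MemBV N u ∧ tv N u ^ a + nrm1 N u ^ b = 1 ∧
        r = (1 - nrm1 N u) / nrmq N q u ^ q } =
    (1 / (1 / ((N : ℝ) ^ (N - 1) * omegaS N)) ^ (q - 1)) *
      sInf { r | ∃ t : ℝ, 0 < t ∧
        r = ((1+t) ^ (1/b) - 1) * (1+t) ^ ((q-1)*((N:ℝ)/a - ((N:ℝ)-1)/b)) /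
              t ^ ((q-1)*(N:ℝ)/a) } := by
  have hω : 0 < (N : ℝ) ^ (N - 1) * omegaS N := by
    have := vol_pos N
    rw [omegaS]; positivity
  have hKe : 1 / (1 / ((N : ℝ) ^ (N - 1) * omegaS N)) ^ (q - 1) =
      ((N : ℝ) ^ (N - 1) * omegaS N) ^ (q-1) := by
    rw [Real.div_rpow zero_le_one hω.le, Real.one_rpow, one_div_one_div]
  rw [hKe]
  set K := ((N : ℝ) ^ (N - 1) * omegaS N) ^ (q-1) with hK
  have hK0 : 0 < K := by positivity
  set G := { r : ℝ | ∃ t : ℝ, 0 < t ∧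
        r = ((1+t) ^ (1/b) - 1) * (1+t) ^ ((q-1)*((N:ℝ)/a - ((N:ℝ)-1)/b)) /
              t ^ ((q-1)*(N:ℝ)/a) } with hG
  set L := { r : ℝ | ∃ u : Euc N → ℝ, MemBV N u ∧ tv N u ^ a + nrm1 N u ^ b = 1 ∧
        r = (1 - nrm1 N u) / nrmq N q u ^ q } with hL
  have hGb : BddBelow G := by
    refine ⟨0, ?_⟩
    rintro r ⟨t, ht, rfl⟩
    have : 1 ≤ (1+t) ^ (1/b) := Real.one_le_rpow (by linarith) (by positivity)
    have : 0 ≤ (1+t) ^ (1/b) - 1 := by linarith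
    positivity
  have hGn : G.Nonempty := ⟨_, 1, one_pos, rfl⟩
  have hlow : ∀ r ∈ L, K * sInf G ≤ r := by
    rintro r ⟨u, hu, h, rfl⟩
    obtain ⟨hX, hY, hq⟩ := bv_pos hN hq1 hq2 ha hb hu h
    have hX1 : nrm1 N u ≤ 1 := by
      by_contra! hh
      have h1 : 1 < nrm1 N u ^ b := Real.one_lt_rpow hh hb
      have h2 : 0 < tv N u ^ a := by positivity
      linarith
    have hg := csInf_le hGb (show _ ∈ G from ⟨tv N u ^ a / nrm1 N u ^ b, by positivity, rfl⟩)
    rw [g_eq ha hb hX hY h] at hg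
    have h2 := (gn hN hq1 hq2 hu).2
    calc K * sInf G ≤ K * ((1 - nrm1 N u) / (nrm1 N u ^ (q - (q-1)*N) * tv N u ^ ((q-1)*(N:ℝ)))) := by
          gcongr
      _ ≤ K * ((1 - nrm1 N u) / (K * nrmq N q u ^ q)) := by
          have : 0 ≤ 1 - nrm1 N u := by linarith
          gcongr
      _ = _ := by field_simp
  have hup : ∀ r ∈ G, K * r ∈ L := by
    rintro r ⟨t, ht, rfl⟩
    obtain ⟨X, hX⟩ : ∃ X : ℝ, X = (1/(1+t)) ^ (1/b) := ⟨_, rfl⟩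
    obtain ⟨Y, hY⟩ : ∃ Y : ℝ, Y = (t/(1+t)) ^ (1/a) := ⟨_, rfl⟩
    have hX0 : 0 < X := by rw [hX]; positivity
    have hY0 : 0 < Y := by rw [hY]; positivity
    have hXb : X ^ b = 1/(1+t) := by
      rw [hX, ← Real.rpow_mul (by positivity), one_div_mul_cancel hb.ne', Real.rpow_one]
    have hYa : Y ^ a = t/(1+t) := by
      rw [hY, ← Real.rpow_mul (by positivity), one_div_mul_cancel ha.ne', Real.rpow_one]
    have h : Y ^ a + X ^ b = 1 := by rw [hXb, hYa]; field_simp; ring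
    have htt : t = Y ^ a / X ^ b := by rw [hXb, hYa]; field_simp
    obtain ⟨u, hu, h1, h2, h3⟩ := attain hN hq1 hq2 hX0 hY0
    refine ⟨u, hu, by rw [h1, h2, h], ?_⟩
    rw [htt, g_eq ha hb hX0 hY0 h, ← h3, h2, ← hK]
    have : 0 < nrmq N q u ^ q := (bv_pos hN hq1 hq2 ha hb hu (by rw [h1, h2, h])).2.2
    field_simp
  have hLn : L.Nonempty := ⟨_, hup _ hGn.choose_spec⟩
  refine le_antisymm ?_ (le_csInf hLn hlow)
  rw [← div_le_iff₀' hK0]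
  refine le_csInf hGn fun r hr => ?_
  rw [div_le_iff₀' hK0]
  exact csInf_le ⟨_, hlow⟩ (hup r hr)
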